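/- arXiv:1801.10436 — 7 statements merged into one kernel-verified Lean document; each statement's English description precedes it below -/
import Mathlib

section
/- Let A = (Q,Σ,δ) be a DFA which is not synchronizing, and let B = (Q,Σ',δ') be an extension of A (Σ ⊆ Σ', δ' agrees with δ on Σ) which is synchronizing. Then B has a symbol a ∈ Σ' such that the DFA obtained from A by adding the symbol a with its transitions from B has strictly more synchronizing pairs of states than A. Here a pair {p,q} of distinct states of a DFA is a synchronizing pair if there exists a word w with pw = qw. -/
/-- The state reached from `q` after reading word `w` in a DFA with
transition function `δ`. -/
def dfaRun {Q σ : Type*} (δ : Q → σ → Q) (q : Q) (w : List σ) : Q :=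
  w.foldl δ q

/-- A word `w` is synchronizing for the DFA `δ`. -/
def IsSyncWord {Q σ : Type*} (δ : Q → σ → Q) (w : List σ) : Prop :=
  ∃ qs : Q, ∀ q : Q, dfaRun δ q w = qs

/-- `(p,q)` is a synchronizing pair of distinct states: some word merges them. -/
def SyncPair {Q σ : Type*} (δ : Q → σ → Q) (p q : Q) : Prop :=
  p ≠ q ∧ ∃ w : List σ, dfaRun δ p w = dfaRun δ q w

/-- The DFA obtained from `δ` by adding one extra symbol acting as `τ : Q → Q`;
its alphabet is `Option σ`, where `none` is the new symbol. -/
def addSymbol {Q σ : Type*} (δ : Q → σ → Q) (τ : Q → Q) : Q → Option σ → Q :=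
  fun q o => o.elim (τ q) (δ q)

theorem dfaRun_append {Q σ : Type*} (δ : Q → σ → Q) (q : Q) (u v : List σ) :
    dfaRun δ q (u ++ v) = dfaRun δ (dfaRun δ q u) v :=
  List.foldl_append

/-- If every two states can be merged, then some word is synchronizing. -/
theorem exists_isSyncWord_of_forall_merge {Q σ : Type*} [Fintype Q] [Nonempty Q]
    (δ : Q → σ → Q) (h : ∀ p q, ∃ w : List σ, dfaRun δ p w = dfaRun δ q w) :
    ∃ w : List σ, IsSyncWord δ w := by
  classical
  have hfin : ∀ S : Finset Q, ∃ w : List σ, ∃ qs, ∀ q ∈ S, dfaRun δ q w = qs := by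
    intro S
    induction S using Finset.induction_on with
    | empty => exact ⟨[], Classical.arbitrary Q, by simp⟩
    | insert x S _ ih =>
      obtain ⟨w, qs, hw⟩ := ih
      obtain ⟨v, hv⟩ := h (dfaRun δ x w) qs
      refine ⟨w ++ v, dfaRun δ qs v, fun q hq => ?_⟩
      rw [dfaRun_append]
      rcases Finset.mem_insert.1 hq with rfl | hq
      · exact hv
      · rw [hw q hq]
  obtain ⟨w, qs, hw⟩ := hfin Finset.univ
  exact ⟨w, qs, fun q => hw q (Finset.mem_univ q)⟩

/-- Along a word merging two states that are not related by a reflexive relation `R`, some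
letter maps an unrelated pair to a related one. -/
theorem exists_letter_of_dfaRun_eq {Q σ : Type*} (δ : Q → σ → Q) {R : Q → Q → Prop}
    (hR : ∀ q, R q q) (w : List σ) {p q : Q} (hpq : ¬ R p q)
    (hw : dfaRun δ p w = dfaRun δ q w) :
    ∃ (a : σ) (r s : Q), ¬ R r s ∧ R (δ r a) (δ s a) := by
  induction w generalizing p q with
  | nil =>
    obtain rfl : p = q := hw
    exact absurd (hR p) hpq
  | cons a w ih =>
    by_cases h : R (δ p a) (δ q a)
    · exact ⟨a, p, q, hpq, h⟩
    · exact ih h hw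

theorem dfaRun_addSymbol_map_some {Q σ : Type*} (δ : Q → σ → Q) (τ : Q → Q) (q : Q)
    (w : List σ) : dfaRun (addSymbol δ τ) q (w.map some) = dfaRun δ q w :=
  List.foldl_map

/-- If `A = (Q,Σ,δ)` is not synchronizing and its extension `B = (Q,Σ',δ')` is
synchronizing, then `B` has a symbol `a` such that adding `a` (with its transitions
from `B`) to `A` yields strictly more synchronizing pairs of states than `A` has. -/
theorem extension_adds_sync_pair {Q : Type*} [Fintype Q] {σ σ' : Type*}
    (δ : Q → σ → Q) (δ' : Q → σ' → Q)
    (ι : σ → σ') (hinj : Function.Injective ι)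
    (hext : ∀ q a, δ' q (ι a) = δ q a)
    (hA : ¬ ∃ w : List σ, IsSyncWord δ w)
    (hB : ∃ w' : List σ', IsSyncWord δ' w') :
    ∃ a : σ',
      {p : Q × Q | SyncPair δ p.1 p.2}.ncard <
        {p : Q × Q | SyncPair (addSymbol δ (fun q => δ' q a)) p.1 p.2}.ncard := by
  obtain ⟨w', qs, hw'⟩ := hB
  have : Nonempty Q := ⟨qs⟩
  obtain ⟨p, q, hpq⟩ : ∃ p q, ¬ ∃ w : List σ, dfaRun δ p w = dfaRun δ q w := by
    by_contra! h
    exact hA (exists_isSyncWord_of_forall_merge δ h)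
  obtain ⟨a, r, s, hrs, w, hw⟩ := exists_letter_of_dfaRun_eq δ'
    (R := fun p q => ∃ w : List σ, dfaRun δ p w = dfaRun δ q w)
    (fun _ => ⟨[], rfl⟩) w' hpq ((hw' p).trans (hw' q).symm)
  refine ⟨a, Set.ncard_lt_ncard ((Set.ssubset_iff_of_subset ?_).2 ⟨(r, s), ?_, ?_⟩)
    (Set.toFinite _)⟩
  · rintro ⟨x, y⟩ ⟨hne, v, hv⟩
    refine ⟨hne, v.map some, ?_⟩
    simpa only [dfaRun_addSymbol_map_some] using hv
  · refine ⟨fun h : r = s => hrs ⟨[], h⟩, none :: w.map some, ?_⟩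
    change dfaRun _ (δ' r a) _ = dfaRun _ (δ' s a) _
    simpa only [dfaRun_addSymbol_map_some] using hw
  · exact fun h => hrs h.2
end

section
/- For every n ≥ 3, the PFA T_n is carefully synchronizing; its shortest carefully synchronizing word is unique, equals (b a^{n−2})^{n−2} c v, and has length 3(n−1)(n−2)/2 + 1, where v = (a^{n−2} b)^{(n−2)/2} if n is even, and v = a^{(n−3)/2} b (a^{n−2} b)^{(n−3)/2} if n is odd. -/
/-- One step of a PFA on an `Option` state. -/
def pfaStep {Q σ : Type*} (δ : Q → σ → Option Q) (o : Option Q) (a : σ) : Option Q :=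
  o.bind fun q => δ q a

/-- The (partial) state reached from `q` after reading word `w` in the PFA `δ`. -/
def pfaRun {Q σ : Type*} (δ : Q → σ → Option Q) (q : Q) (w : List σ) : Option Q :=
  w.foldl (pfaStep δ) (some q)

/-- A word `w` is carefully synchronizing for the PFA `δ`. -/
def IsCareSyncWord {Q σ : Type*} (δ : Q → σ → Option Q) (w : List σ) : Prop :=
  ∃ qs : Q, ∀ q : Q, pfaRun δ q w = some qs

/-- The PFA `T_n`: states `Fin n` (state `i` represents the paper's state `i+1`),
alphabet `Fin 3` with `0 = a`, `1 = b`, `2 = c`. -/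
def Tdelta (n : ℕ) (hn : 3 ≤ n) : Fin n → Fin 3 → Option (Fin n) := fun q x =>
  if x = 0 then
    -- a : q ↦ q+1 for paper states 1 ≤ q ≤ n−2, (n−1) ↦ 1, n ↦ n
    if hq : q.val + 3 ≤ n then some ⟨q.val + 1, by omega⟩
    else if q.val = n - 2 then some ⟨0, by omega⟩
    else some q
  else if x = 1 then
    -- b : 1 ↦ 2, identity elsewhere
    if q.val = 0 then some ⟨1, by omega⟩ else some q
  else
    -- c : 1 ↦ 2, undefined on paper states 2..n−1, n ↦ 2 + ⌊(n−1)/2⌋ (mod n−1 if n = 3)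
    if q.val = 0 then some ⟨1, by omega⟩
    else if q.val = n - 1 then
      (if hn3 : n = 3 then some ⟨0, by omega⟩ else some ⟨1 + (n - 1) / 2, by omega⟩)
    else none

/-- `repw l k` is the word `l` repeated `k` times. -/
def repw {α : Type*} (l : List α) : ℕ → List α
  | 0 => []
  | k + 1 => l ++ repw l k

/-- The word `(b a^{n−2})^{n−2} c v` where `v = (a^{n−2} b)^{(n−2)/2}` if `n` is even and
`v = a^{(n−3)/2} b (a^{n−2} b)^{(n−3)/2}` if `n` is odd (`0 = a`, `1 = b`, `2 = c`). -/
def Tword (n : ℕ) : List (Fin 3) :=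
  repw ((1 : Fin 3) :: List.replicate (n - 2) (0 : Fin 3)) (n - 2) ++ [(2 : Fin 3)] ++
    (if n % 2 = 0 then
      repw (List.replicate (n - 2) (0 : Fin 3) ++ [(1 : Fin 3)]) ((n - 2) / 2)
    else
      List.replicate ((n - 3) / 2) (0 : Fin 3) ++ [(1 : Fin 3)] ++
        repw (List.replicate (n - 2) (0 : Fin 3) ++ [(1 : Fin 3)]) ((n - 3) / 2))

/-- Cyclic distance from `i` forward to `p` on a cycle of length `m`. -/
def cycDist (m i p : ℕ) : ℕ := if i ≤ p then p - i else p + m - i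

/-- The cyclic predecessor of `p` on a cycle of length `m`. -/
def cycPred (m p : ℕ) : ℕ := if p = 0 then m - 1 else p - 1

/-- The actions of `a` (if `x = 0`) and `b` (otherwise) on the cycle `{0, …, m - 1}`. -/
def cycStep (m i : ℕ) (x : Fin 3) : ℕ :=
  if x = 0 then (if i = m - 1 then 0 else i + 1) else (if i = 0 then 1 else i)

/-- The action of a word over `{a, b}` on the cycle `{0, …, m - 1}`. -/
def cycRun (m : ℕ) (i : ℕ) (w : List (Fin 3)) : ℕ := w.foldl (cycStep m) i

/-- The prefix of length `t` of the infinite word `(b a^{m-1})^ω`. -/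
def baPrefix (m t : ℕ) : List (Fin 3) :=
  (List.range t).map fun j => if j % m = 0 then 1 else 0

theorem baPrefix_succ (m t : ℕ) :
    baPrefix m (t + 1) = baPrefix m t ++ [if t % m = 0 then 1 else 0] := by
  simp [baPrefix, List.range_succ]

theorem length_baPrefix (m t : ℕ) : (baPrefix m t).length = t := by
  simp [baPrefix]

theorem two_notMem_baPrefix (m t : ℕ) : (2 : Fin 3) ∉ baPrefix m t := by
  simp only [baPrefix, List.mem_map, not_exists, not_and]
  intro j _
  split_ifs <;> decide

theorem baPrefix_mul_add (m k s : ℕ) :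
    baPrefix m (m * k + s) = baPrefix m (m * k) ++ baPrefix m s := by
  simp [baPrefix, List.range_add, Function.comp_def]

theorem baPrefix_of_le {m s : ℕ} (hs : s + 1 ≤ m) :
    baPrefix m (s + 1) = 1 :: List.replicate s 0 := by
  induction s with
  | zero => simp [baPrefix]
  | succ s ih =>
    rw [baPrefix_succ, ih (by omega), Nat.mod_eq_of_lt (by omega), if_neg (by omega),
      List.replicate_succ', List.cons_append]

theorem repw_succ' {α : Type*} (l : List α) (k : ℕ) : repw l (k + 1) = repw l k ++ l := by
  induction k with
  | zero => simp [repw]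
  | succ k ih => rw [repw, ih, ← List.append_assoc, ← repw, ← ih]

theorem reverse_repw {α : Type*} (l : List α) (k : ℕ) :
    (repw l k).reverse = repw l.reverse k := by
  induction k with
  | zero => simp [repw]
  | succ k ih => rw [repw, List.reverse_append, ih, repw_succ']

theorem repw_eq_baPrefix {m : ℕ} (hm : 1 ≤ m) (k : ℕ) :
    repw ((1 : Fin 3) :: List.replicate (m - 1) 0) k = baPrefix m (m * k) := by
  induction k with
  | zero => simp [repw, baPrefix]
  | succ k ih =>
    rw [repw_succ', ih, Nat.mul_succ, baPrefix_mul_add]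
    obtain ⟨s, rfl⟩ : ∃ s, m = s + 1 := ⟨m - 1, by omega⟩
    rw [baPrefix_of_le le_rfl, Nat.add_sub_cancel]

theorem Tword_eq {m : ℕ} (hm : 2 ≤ m) :
    Tword (m + 1) =
      baPrefix m (m * (m - 1)) ++ 2 :: (baPrefix m (m * (m - 1) / 2)).reverse := by
  have hrev : ∀ k, repw (List.replicate (m - 1) (0 : Fin 3) ++ [1]) k =
      (baPrefix m (m * k)).reverse := by
    intro k
    rw [← repw_eq_baPrefix (by omega), reverse_repw]
    simp
  rw [Tword, show m + 1 - 2 = m - 1 by omega, repw_eq_baPrefix (by omega), hrev, hrev,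
    List.append_assoc, List.singleton_append]
  congr 2
  split_ifs with h
  · rw [Nat.mul_div_assoc m (by omega)]
  · obtain ⟨s, rfl⟩ : ∃ s, m = 2 * (s + 1) := ⟨m / 2 - 1, by omega⟩
    have e : 2 * (s + 1) * (2 * (s + 1) - 1) / 2 = 2 * (s + 1) * s + (s + 1) := by
      rw [show 2 * (s + 1) - 1 = 2 * s + 1 by omega, mul_assoc, Nat.mul_div_cancel_left _ two_pos]
      ring
    rw [e, baPrefix_mul_add, baPrefix_of_le (by omega), List.reverse_append,
      show (2 * (s + 1) + 1 - 3) / 2 = s by omega]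
    simp

theorem cycStep_lt {m i : ℕ} (hm : 2 ≤ m) (hi : i < m) (x : Fin 3) : cycStep m i x < m := by
  unfold cycStep
  split_ifs <;> omega

theorem cycRun_lt {m i : ℕ} (hm : 2 ≤ m) (hi : i < m) (w : List (Fin 3)) :
    cycRun m i w < m := by
  induction w generalizing i with
  | nil => exact hi
  | cons x w ih => exact ih (cycStep_lt hm hi x)

theorem cycRun_snoc (m i : ℕ) (w : List (Fin 3)) (x : Fin 3) :
    cycRun m i (w ++ [x]) = cycStep m (cycRun m i w) x := by
  simp [cycRun]

/-- If the image of the cycle under `u` contains `p` and avoids the `k` states before `p`, then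
`u` has length at least `m * k + cycPred m p - (m - 1)`, with equality only for prefixes of
`(b a^{m-1})^ω`. -/
theorem gap_bound {m : ℕ} (hm : 2 ≤ m) (u : List (Fin 3)) (hu : (2 : Fin 3) ∉ u)
    (p k : ℕ) (hk : k < m) (hp : ∃ i < m, cycRun m i u = p)
    (hgap : ∀ i < m, cycRun m i u = p ∨ k < cycDist m (cycRun m i u) p) :
    m * k + cycPred m p ≤ u.length + (m - 1) ∧
      (u.length + (m - 1) ≤ m * k + cycPred m p → u = baPrefix m u.length) := by
  induction u using List.reverseRecOn generalizing p k with
  | nil =>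
    obtain ⟨i, hi, rfl⟩ := hp
    have hk0 : k = 0 := by
      have h := hgap (cycPred m i) (by unfold cycPred; split_ifs <;> omega)
      simp only [cycRun, List.foldl_nil, cycDist, cycPred] at h
      by_cases hi0 : i = 0
      · simp only [hi0, if_true] at h
        split_ifs at h <;> omega
      · simp only [hi0, if_false] at h
        split_ifs at h <;> omega
    subst hk0
    refine ⟨?_, fun _ => rfl⟩
    have hpred : cycPred m i ≤ m - 1 := by unfold cycPred; split_ifs <;> omega
    simpa [cycRun] using hpred
  | append_singleton u x ih =>
    simp only [List.mem_append, List.mem_singleton, not_or] at hu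
    specialize ih hu.1
    simp only [cycRun_snoc] at hp hgap
    obtain ⟨i, hi, hip⟩ := hp
    have hlt : ∀ i < m, cycRun m i u < m := fun i hi => cycRun_lt hm hi u
    rw [List.length_append, List.length_singleton]
    by_cases hx : x = 0
    · subst hx
      have hpm : p < m := hip ▸ cycStep_lt hm (hlt i hi) 0
      have hprev := ih (cycPred m p) k hk ⟨i, hi, by
        have := hlt i hi
        simp only [cycStep, if_true] at hip
        unfold cycPred
        split_ifs at * <;> omega⟩ (fun j hj => by
          have := hlt j hj
          have := hgap j hj
          simp only [cycStep, if_true, cycDist] at this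
          unfold cycPred cycDist
          split_ifs at * <;> omega)
      by_cases hp1 : p = 1
      · subst hp1
        simp only [cycPred] at hprev ⊢
        norm_num at hprev ⊢
        exact ⟨by omega, fun _ => by omega⟩
      · have hval : cycPred m p = cycPred m (cycPred m p) + 1 := by
          unfold cycPred
          split_ifs <;> omega
        refine ⟨by omega, fun h => ?_⟩
        rw [baPrefix_succ, ← hprev.2 (by omega), if_neg]
        intro hmod
        obtain ⟨d, hd⟩ := Nat.dvd_of_mod_eq_zero hmod
        have h1 : m * d + m = m * k + cycPred m p := by omega
        have h2 : cycPred m p < m := by unfold cycPred; split_ifs <;> omega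
        have h3 : m * (d + 1) % m = (m * k + cycPred m p) % m := by rw [← h1]; ring_nf
        rw [Nat.mul_mod_right, Nat.mul_add_mod, Nat.mod_eq_of_lt h2] at h3
        omega
    · have hx1 : x = 1 := by omega
      subst hx1
      simp only [cycStep, if_neg hx] at hip hgap
      have hpm : p < m := by
        have := hlt i hi
        split_ifs at hip <;> omega
      by_cases h0 : p = 1 ∧ ∃ j < m, cycRun m j u = 0
      · obtain ⟨rfl, j, hj, hj0⟩ := h0
        rcases Nat.eq_zero_or_pos k with rfl | hkpos
        · simp only [cycPred]
          norm_num
        · obtain ⟨l, rfl⟩ : ∃ l, k = l + 1 := ⟨k - 1, by omega⟩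
          have hprev := ih 0 l (by omega) ⟨j, hj, hj0⟩ (fun i hi => by
            have := hlt i hi
            have := hgap i hi
            unfold cycDist at *
            split_ifs at * <;> omega)
          have e : m * (l + 1) = m * l + m := by ring
          simp only [cycPred] at hprev ⊢
          norm_num at hprev ⊢
          refine ⟨by omega, fun h => ?_⟩
          have hlen : u.length = m * l := by omega
          rw [baPrefix_succ, ← hprev.2 (by omega), hlen, Nat.mul_mod_right, if_pos rfl]
      · have hp0 : p ≠ 0 := by split_ifs at hip <;> omega
        have hip' : cycRun m i u = p := by
          by_cases hi0 : cycRun m i u = 0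
          · rw [if_pos hi0] at hip
            exact absurd ⟨hip.symm, i, hi, hi0⟩ h0
          · rwa [if_neg hi0] at hip
        have hprev := ih p k hk ⟨i, hi, hip'⟩ (fun j hj => by
          have := hlt j hj
          have := hgap j hj
          by_cases hj0 : cycRun m j u = 0
          · have : p ≠ 1 := fun h => h0 ⟨h, j, hj, hj0⟩
            simp only [hj0] at *
            unfold cycDist at *
            split_ifs at * <;> omega
          · rwa [if_neg hj0] at this)
        exact ⟨by omega, fun _ => by omega⟩

/-- The prefixes of `(b a^{m-1})^ω` produce gaps attaining the bound of `gap_bound`. -/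
theorem gap_baPrefix {m : ℕ} (hm : 2 ≤ m) (t p k : ℕ) (hp : p < m)
    (ht : t + (m - 1) = m * k + cycPred m p) (hk : k < m) (i : ℕ) (hi : i < m) :
    cycRun m i (baPrefix m t) = p ∨ k < cycDist m (cycRun m i (baPrefix m t)) p := by
  induction t generalizing p k with
  | zero =>
    have h2 : cycPred m p < m := by unfold cycPred; split_ifs <;> omega
    have hk0 : k = 0 := by
      by_contra h
      obtain ⟨l, rfl⟩ : ∃ l, k = l + 1 := ⟨k - 1, by omega⟩
      have e : m * (l + 1) = m * l + m := by ring
      omega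
    subst hk0
    simp only [baPrefix, List.range_zero, List.map_nil, cycRun, List.foldl_nil, cycDist]
    split_ifs <;> omega
  | succ t ih =>
    have hlt := cycRun_lt hm hi (baPrefix m t)
    rw [baPrefix_succ, cycRun_snoc]
    by_cases hp1 : p = 1
    · subst hp1
      have hkpos : k ≠ 0 := by
        rintro rfl
        simp only [cycPred] at ht
        norm_num at ht
      obtain ⟨l, rfl⟩ : ∃ l, k = l + 1 := ⟨k - 1, by omega⟩
      have e : m * (l + 1) = m * l + m := by ring
      simp only [cycPred] at ht
      norm_num at ht
      have htl : t = m * l := by omega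
      have hprev := ih 0 l (by omega) (by simp only [cycPred, if_true]; omega) (by omega)
      rw [if_pos (by rw [htl, Nat.mul_mod_right])]
      unfold cycStep cycDist at *
      norm_num
      split_ifs at * <;> omega
    · have h2 : cycPred m p < m := by unfold cycPred; split_ifs <;> omega
      have hpos : cycPred m p ≠ 0 := by unfold cycPred; split_ifs <;> omega
      have hmod : t % m ≠ 0 := by
        intro hmod
        obtain ⟨d, hd⟩ := Nat.dvd_of_mod_eq_zero hmod
        have h1 : m * d + m = m * k + cycPred m p := by omega
        have h3 : m * (d + 1) % m = (m * k + cycPred m p) % m := by rw [← h1]; ring_nf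
        rw [Nat.mul_mod_right, Nat.mul_add_mod, Nat.mod_eq_of_lt h2] at h3
        omega
      have hprev := ih (cycPred m p) k h2 (by
        unfold cycPred at *
        split_ifs at * <;> omega) hk
      rw [if_neg hmod]
      unfold cycStep cycDist cycPred at *
      norm_num
      split_ifs at * <;> omega

/-- Number of letters needed to merge `q` with `p` by repeatedly shortening the arc from `p`
to `q`. -/
def mergeCost (m p q : ℕ) : ℤ := m * cycDist m p q - cycPred m p

theorem mod_ne_one_of_mergeCost {m p q r : ℕ} (hp : p < m) (hp0 : p ≠ 0)
    (h : mergeCost m p q = r + 1) : r % m ≠ 0 := by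
  intro hmod
  obtain ⟨d, hd⟩ := Nat.dvd_of_mod_eq_zero hmod
  unfold mergeCost at h
  rw [cycPred, if_neg hp0] at h
  have h1 : m * cycDist m p q = m * d + p := by
    zify
    push_cast [show 1 ≤ p by omega] at h
    have : (r : ℤ) = m * d := by exact_mod_cast hd
    linarith
  have h3 : m * cycDist m p q % m = (m * d + p) % m := by rw [h1]
  rw [Nat.mul_mod_right, Nat.mul_add_mod, Nat.mod_eq_of_lt hp] at h3
  omega

theorem cycDist_cycStep_zero {m p q : ℕ} (hp : p < m) (hq : q < m) :
    cycDist m (cycStep m p 0) (cycStep m q 0) = cycDist m p q := by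
  simp only [cycStep, if_true]
  unfold cycDist
  split_ifs <;> omega

theorem mergeCost_cycStep_zero {m p q : ℕ} (hp : p < m) (hq : q < m) (hp0 : p ≠ 0) :
    mergeCost m (cycStep m p 0) (cycStep m q 0) = mergeCost m p q - 1 := by
  have : cycPred m (cycStep m p 0) = cycPred m p + 1 := by
    by_cases h : p = m - 1
    · simp only [cycStep, cycPred, if_pos h, if_neg hp0, if_true]
      omega
    · simp only [cycStep, cycPred, if_neg h, if_neg hp0, if_true, if_neg (Nat.succ_ne_zero p)]
      omega
  rw [mergeCost, mergeCost, cycDist_cycStep_zero hp hq, this]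
  push_cast
  ring

theorem mergeCost_zero_cycStep_zero {m q : ℕ} (hm : 2 ≤ m) (hq : q < m) :
    mergeCost m (cycStep m 0 0) (cycStep m q 0) = mergeCost m 0 q + (m - 1) := by
  have h1 : cycPred m (cycStep m 0 0) = 0 := by
    simp [cycStep, cycPred, show 0 ≠ m - 1 by omega]
  rw [mergeCost, mergeCost, cycDist_cycStep_zero (by omega) hq, h1, cycPred, if_pos rfl]
  push_cast [show 1 ≤ m by omega]
  ring

theorem mergeCost_one {m q : ℕ} (hm : 2 ≤ m) (hq0 : q ≠ 0) :
    mergeCost m 1 q = mergeCost m 0 q - 1 := by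
  have h1 : cycDist m 0 q = cycDist m 1 q + 1 := by
    unfold cycDist
    split_ifs <;> omega
  rw [mergeCost, mergeCost, h1]
  simp only [cycPred]
  norm_num
  push_cast [show 1 ≤ m by omega]
  ring

theorem mergeCost_right_one {m q : ℕ} (hq : q < m) (hq1 : q ≠ 1) :
    mergeCost m q 1 = mergeCost m q 0 + m := by
  have h1 : cycDist m q 1 = cycDist m q 0 + 1 := by
    unfold cycDist
    split_ifs <;> omega
  rw [mergeCost, mergeCost, h1]
  push_cast
  ring

/-- The reversed prefixes of `(b a^{m-1})^ω` merge pairs at their `mergeCost`. -/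
theorem cycRun_reverse_baPrefix_eq {m : ℕ} (hm : 2 ≤ m) (r p q : ℕ) (hp : p < m) (hq : q < m)
    (h : mergeCost m p q = r) :
    cycRun m p (baPrefix m r).reverse = cycRun m q (baPrefix m r).reverse := by
  induction r generalizing p q with
  | zero =>
    have hlt : cycPred m p < m := by unfold cycPred; split_ifs <;> omega
    have h' : m * cycDist m p q = cycPred m p := by
      unfold mergeCost at h
      zify
      push_cast at h
      linarith
    have hd : cycDist m p q = 0 := by
      by_contra hne
      have := Nat.le_mul_of_pos_right m (Nat.pos_of_ne_zero hne)
      omega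
    have : p = q := by
      unfold cycDist at hd
      split_ifs at hd <;> omega
    rw [this]
  | succ r ih =>
    rw [baPrefix_succ, List.reverse_append, List.reverse_singleton, List.singleton_append]
    change cycRun m (cycStep m p _) _ = cycRun m (cycStep m q _) _
    push_cast at h
    by_cases hp0 : p = 0
    · subst hp0
      have hq0 : q ≠ 0 := by
        rintro rfl
        simp only [mergeCost, cycDist, cycPred] at h
        norm_num at h
        omega
      have hmod : r % m = 0 := by
        have hr : (r : ℤ) = m * ((q : ℤ) - 1) := by
          simp only [mergeCost, cycDist, cycPred] at h
          norm_num at h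
          push_cast [show 1 ≤ m by omega] at h
          linarith
        have : (m : ℤ) ∣ r := ⟨_, hr⟩
        exact Nat.mod_eq_zero_of_dvd (by exact_mod_cast this)
      rw [if_pos hmod]
      have h1 : cycStep m 0 1 = 1 := by simp [cycStep]
      have h2 : cycStep m q 1 = q := by simp [cycStep, hq0]
      rw [h1, h2]
      exact ih 1 q (by omega) hq (by rw [mergeCost_one hm hq0]; omega)
    · rw [if_neg (mod_ne_one_of_mergeCost hp hp0 h)]
      exact ih _ _ (cycStep_lt hm hp 0) (cycStep_lt hm hq 0)
        (by rw [mergeCost_cycStep_zero hp hq hp0]; omega)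

theorem pfaRun_cons {Q σ : Type*} (δ : Q → σ → Option Q) (q : Q) (x : σ) (w : List σ) :
    pfaRun δ q (x :: w) = (δ q x).bind fun r => pfaRun δ r w := by
  have hnone : ∀ w : List σ, w.foldl (pfaStep δ) none = none := by
    intro w
    induction w with
    | nil => rfl
    | cons y w ih => exact ih
  unfold pfaRun
  rw [List.foldl_cons]
  change List.foldl _ (δ q x) w = _
  cases δ q x with
  | none => exact hnone w
  | some r => rfl

theorem pfaRun_append {Q σ : Type*} (δ : Q → σ → Option Q) (q : Q) (u w : List σ) :
    pfaRun δ q (u ++ w) = (pfaRun δ q u).bind fun r => pfaRun δ r w := by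
  induction u generalizing q with
  | nil => rfl
  | cons x u ih =>
    rw [List.cons_append, pfaRun_cons, pfaRun_cons, Option.bind_assoc]
    simp only [ih]

theorem Tdelta_of_lt {m : ℕ} (hn : 3 ≤ m + 1) {q : Fin (m + 1)} (hq : q.val < m) {x : Fin 3}
    (hx : x ≠ 2) :
    Tdelta (m + 1) hn q x =
      some ⟨cycStep m q x, (cycStep_lt (by omega) hq x).trans (Nat.lt_succ_self m)⟩ := by
  have hx' : x = 0 ∨ x = 1 := by omega
  rcases hx' with rfl | rfl <;> simp only [Tdelta, cycStep, if_true, if_neg one_ne_zero] <;>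
    split_ifs <;> first | omega | rfl

theorem Tdelta_last {m : ℕ} (hn : 3 ≤ m + 1) {x : Fin 3} (hx : x ≠ 2) :
    Tdelta (m + 1) hn (Fin.last m) x = some (Fin.last m) := by
  have hx' : x = 0 ∨ x = 1 := by omega
  rcases hx' with rfl | rfl <;> simp only [Tdelta, Fin.val_last, if_true, if_neg one_ne_zero] <;>
    split_ifs <;> first | omega | rfl

theorem Tdelta_two_of_lt {m : ℕ} (hn : 3 ≤ m + 1) {q : Fin (m + 1)} (hq : q.val < m) :
    Tdelta (m + 1) hn q 2 = if q.val = 0 then some ⟨1, by omega⟩ else none := by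
  simp only [Tdelta, if_neg (show (2 : Fin 3) ≠ 0 by decide),
    if_neg (show (2 : Fin 3) ≠ 1 by decide)]
  split_ifs <;> first | omega | rfl

theorem Tdelta_two_last {m : ℕ} (hn : 3 ≤ m + 1) :
    ∃ r : Fin (m + 1), Tdelta (m + 1) hn (Fin.last m) 2 = some r ∧
      r.val = if m = 2 then 0 else 1 + m / 2 := by
  unfold Tdelta
  norm_num
  split_ifs <;> first | omega | simp

theorem pfaRun_of_lt {m : ℕ} (hn : 3 ≤ m + 1) {q : Fin (m + 1)} (hq : q.val < m)
    {w : List (Fin 3)} (hw : (2 : Fin 3) ∉ w) :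
    pfaRun (Tdelta (m + 1) hn) q w =
      some ⟨cycRun m q w, (cycRun_lt (by omega) hq w).trans (Nat.lt_succ_self m)⟩ := by
  induction w generalizing q with
  | nil => rfl
  | cons x w ih =>
    simp only [List.mem_cons, not_or] at hw
    rw [pfaRun_cons, Tdelta_of_lt hn hq (Ne.symm hw.1), Option.bind_some,
      ih (cycStep_lt (by omega) hq x) hw.2]
    rfl

theorem pfaRun_last {m : ℕ} (hn : 3 ≤ m + 1) {w : List (Fin 3)} (hw : (2 : Fin 3) ∉ w) :
    pfaRun (Tdelta (m + 1) hn) (Fin.last m) w = some (Fin.last m) := by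
  induction w with
  | nil => rfl
  | cons x w ih =>
    simp only [List.mem_cons, not_or] at hw
    rw [pfaRun_cons, Tdelta_last hn (Ne.symm hw.1), Option.bind_some, ih hw.2]

/-- A word merging two states of the cycle is at least as long as the smaller `mergeCost`, with
equality only for reversed prefixes of `(b a^{m-1})^ω`. -/
theorem merge_bound {m : ℕ} (hn : 3 ≤ m + 1) (v : List (Fin 3)) (p q s : Fin (m + 1))
    (hp : p.val < m) (hq : q.val < m) (hps : pfaRun (Tdelta (m + 1) hn) p v = some s)
    (hqs : pfaRun (Tdelta (m + 1) hn) q v = some s) :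
    (mergeCost m p q ≤ v.length ∨ mergeCost m q p ≤ v.length) ∧
      ((v.length : ℤ) ≤ mergeCost m p q → (v.length : ℤ) ≤ mergeCost m q p →
        v = (baPrefix m v.length).reverse) := by
  induction v generalizing p q with
  | nil =>
    have hpq : p = q := Option.some_injective _ (hps.trans hqs.symm)
    subst hpq
    refine ⟨Or.inl ?_, fun _ _ => rfl⟩
    simp [mergeCost, cycDist]
  | cons x v ih =>
    by_cases hpq : p = q
    · subst hpq
      have h : mergeCost m p p ≤ 0 := by simp [mergeCost, cycDist]
      rw [List.length_cons]
      push_cast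
      exact ⟨Or.inl (by omega), fun _ _ => by omega⟩
    have hne : p.val ≠ q.val := fun h => hpq (Fin.ext h)
    rw [pfaRun_cons] at hps hqs
    have hx : x ≠ 2 := by
      rintro rfl
      rw [Tdelta_two_of_lt hn hp] at hps
      rw [Tdelta_two_of_lt hn hq] at hqs
      split_ifs at hps hqs
      · omega
      all_goals simp at hps hqs
    rw [Tdelta_of_lt hn hp hx, Option.bind_some] at hps
    rw [Tdelta_of_lt hn hq hx, Option.bind_some] at hqs
    have hm : 2 ≤ m := by omega
    have hprev := ih _ _ (cycStep_lt hm hp x) (cycStep_lt hm hq x) hps hqs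
    simp only at hprev
    rw [List.length_cons, baPrefix_succ, List.reverse_append, List.reverse_singleton,
      List.singleton_append]
    push_cast
    by_cases hx0 : x = 0
    · subst hx0
      have hcost : ∀ p q : ℕ, p < m → q < m →
          mergeCost m (cycStep m p 0) (cycStep m q 0) ≤ v.length →
          mergeCost m p q ≤ v.length + 1 ∧
            ((v.length : ℤ) + 1 ≤ mergeCost m p q → v.length % m ≠ 0) := by
        intro p q hp hq h
        by_cases hp0 : p = 0
        · subst hp0
          rw [mergeCost_zero_cycStep_zero hm hq] at h
          exact ⟨by omega, fun _ => by omega⟩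
        · rw [mergeCost_cycStep_zero hp hq hp0] at h
          exact ⟨by omega, fun _ => mod_ne_one_of_mergeCost (q := q) hp hp0 (by omega)⟩
      have hback : ∀ p q : ℕ, p < m → q < m →
          (v.length : ℤ) + 1 ≤ mergeCost m p q →
          (v.length : ℤ) ≤ mergeCost m (cycStep m p 0) (cycStep m q 0) := by
        intro p q hp hq h
        by_cases hp0 : p = 0
        · subst hp0
          rw [mergeCost_zero_cycStep_zero hm hq]
          omega
        · rw [mergeCost_cycStep_zero hp hq hp0]
          omega
      refine ⟨hprev.1.imp (fun h => (hcost _ _ hp hq h).1) (fun h => (hcost _ _ hq hp h).1),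
        fun h1 h2 => ?_⟩
      have hmod : v.length % m ≠ 0 :=
        hprev.1.elim (fun h => (hcost _ _ hp hq h).2 h1) (fun h => (hcost _ _ hq hp h).2 h2)
      rw [if_neg hmod, ← hprev.2 (hback _ _ hp hq h1) (hback _ _ hq hp h2)]
    · have hx1 : x = 1 := by omega
      subst hx1
      have hzero : ∀ q : ℕ, q < m → q ≠ 0 →
          (mergeCost m 1 q ≤ v.length ∨ mergeCost m q 1 ≤ v.length) →
          ((v.length : ℤ) ≤ mergeCost m 1 q → (v.length : ℤ) ≤ mergeCost m q 1 →
            v = (baPrefix m v.length).reverse) →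
          (mergeCost m 0 q ≤ v.length + 1 ∨ mergeCost m q 0 ≤ v.length + 1) ∧
          ((v.length : ℤ) + 1 ≤ mergeCost m 0 q → (v.length : ℤ) + 1 ≤ mergeCost m q 0 →
            1 :: v = (if v.length % m = 0 then 1 else 0) :: (baPrefix m v.length).reverse) := by
        intro q hq hq0 h1 h2
        have e1 := mergeCost_one hm hq0
        by_cases hq1 : q = 1
        · subst hq1
          have h11 : mergeCost m 1 1 = 0 := by simp [mergeCost, cycDist, cycPred]
          refine ⟨Or.inl (by omega), fun h3 _ => ?_⟩
          have hv : v = [] := List.eq_nil_of_length_eq_zero (by omega)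
          subst hv
          simp [baPrefix]
        · have e2 := mergeCost_right_one hq hq1
          refine ⟨by omega, fun h3 h4 => ?_⟩
          rw [← h2 (by omega) (by omega), if_pos]
          have hlen : (v.length : ℤ) = mergeCost m 1 q := by omega
          simp only [mergeCost, cycPred] at hlen
          norm_num at hlen
          rw [Nat.mod_eq_zero_of_dvd ⟨_, by exact_mod_cast hlen⟩]
      have hstep : ∀ q : ℕ, q ≠ 0 → cycStep m q 1 = q := fun q hq => by simp [cycStep, hq]
      have hstep0 : cycStep m 0 1 = 1 := by simp [cycStep]
      by_cases hp0 : p.val = 0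
      · have hq0 : q.val ≠ 0 := by omega
        rw [hp0, hstep0, hstep _ hq0] at hprev
        rw [hp0]
        exact hzero q hq hq0 hprev.1 hprev.2
      · by_cases hq0 : q.val = 0
        · rw [hq0, hstep0, hstep _ hp0] at hprev
          rw [hq0]
          have := hzero p hp hp0 hprev.1.symm fun h1 h2 => hprev.2 h2 h1
          exact ⟨this.1.symm, fun h1 h2 => this.2 h2 h1⟩
        · rw [hstep _ hp0, hstep _ hq0] at hprev
          exact ⟨by omega, fun _ _ => by omega⟩

/-- The two states reached from `{0, m}` by `c` have minimal `mergeCost` equal to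
`m * (m - 1) / 2`. -/
theorem mergeCost_after_two {m r : ℕ} (hm : 2 ≤ m)
    (hr : r = if m = 2 then 0 else 1 + m / 2) :
    ((m * (m - 1) / 2 : ℕ) : ℤ) ≤ mergeCost m 1 r ∧
      ((m * (m - 1) / 2 : ℕ) : ℤ) ≤ mergeCost m r 1 ∧
      (mergeCost m 1 r = (m * (m - 1) / 2 : ℕ) ∨ mergeCost m r 1 = (m * (m - 1) / 2 : ℕ)) := by
  by_cases h2 : m = 2
  · subst h2
    subst hr
    decide
  rw [if_neg h2] at hr
  have d1 : cycDist m 1 r = m / 2 := by unfold cycDist; split_ifs <;> omega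
  have d2 : cycDist m r 1 = m - m / 2 := by unfold cycDist; split_ifs <;> omega
  have p1 : cycPred m 1 = 0 := by simp [cycPred]
  have p2 : cycPred m r = m / 2 := by unfold cycPred; split_ifs <;> omega
  simp only [mergeCost, d1, d2, p1, p2]
  obtain ⟨s, hs | hs⟩ := Nat.even_or_odd' m
  · have e : m * (m - 1) / 2 = s * (m - 1) := by
      conv_lhs => rw [hs]
      rw [mul_assoc, Nat.mul_div_cancel_left _ two_pos, ← hs]
    have e1 : m / 2 = s := by omega
    have e2 : m - s = s := by omega
    rw [e, e1, e2]
    subst hs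
    push_cast [show 1 ≤ 2 * s by omega]
    refine ⟨by nlinarith, by nlinarith, Or.inr (by ring)⟩
  · have e : m * (m - 1) / 2 = m * s := by
      rw [show m - 1 = 2 * s by omega, mul_left_comm, Nat.mul_div_cancel_left _ two_pos]
    have e1 : m / 2 = s := by omega
    have e2 : m - s = s + 1 := by omega
    rw [e, e1, e2]
    subst hs
    push_cast
    refine ⟨by nlinarith, by nlinarith, Or.inl (by ring)⟩

theorem isCareSyncWord_Tword {m : ℕ} (hn : 3 ≤ m + 1) :
    IsCareSyncWord (Tdelta (m + 1) hn) (Tword (m + 1)) := by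
  have hm : 2 ≤ m := by omega
  rw [Tword_eq hm]
  obtain ⟨r, hr, hrv⟩ := Tdelta_two_last hn
  have hrm : r.val < m := by rw [hrv]; split_ifs <;> omega
  have hv : (2 : Fin 3) ∉ (baPrefix m (m * (m - 1) / 2)).reverse := by
    rw [List.mem_reverse]
    exact two_notMem_baPrefix _ _
  have hmerge : cycRun m 1 (baPrefix m (m * (m - 1) / 2)).reverse =
      cycRun m r (baPrefix m (m * (m - 1) / 2)).reverse := by
    rcases (mergeCost_after_two hm hrv).2.2 with h | h
    · exact cycRun_reverse_baPrefix_eq hm _ _ _ (by omega) hrm h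
    · exact (cycRun_reverse_baPrefix_eq hm _ _ _ hrm (by omega) h).symm
  have hu := two_notMem_baPrefix m (m * (m - 1))
  refine ⟨⟨cycRun m r (baPrefix m (m * (m - 1) / 2)).reverse,
    (cycRun_lt hm hrm _).trans (Nat.lt_succ_self m)⟩, fun q => ?_⟩
  rw [pfaRun_append]
  by_cases hq : q.val < m
  · rw [pfaRun_of_lt hn hq hu, Option.bind_some, pfaRun_cons,
      Tdelta_two_of_lt hn (cycRun_lt hm hq _), if_pos, Option.bind_some,
      pfaRun_of_lt hn (show 1 < m by omega) hv]
    · simp only [hmerge]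
    · have h := gap_baPrefix hm (m * (m - 1)) 0 (m - 1) (by omega) (by simp [cycPred])
        (by omega) q hq
      have := cycRun_lt hm hq (baPrefix m (m * (m - 1)))
      change cycRun m q (baPrefix m (m * (m - 1))) = 0
      unfold cycDist at h
      split_ifs at h <;> omega
  · have hql : q = Fin.last m := Fin.ext (by have := q.isLt; simp only [Fin.val_last]; omega)
    rw [hql, pfaRun_last hn hu, Option.bind_some, pfaRun_cons, hr, Option.bind_some,
      pfaRun_of_lt hn hrm hv]

/-- Any carefully synchronizing word splits at its first `c` into a word collapsing the cycle
to `0` and a word merging the two remaining states. -/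
theorem exists_split_of_isCareSyncWord {m : ℕ} (hn : 3 ≤ m + 1) {w : List (Fin 3)}
    (hw : IsCareSyncWord (Tdelta (m + 1) hn) w) :
    ∃ u v, w = u ++ 2 :: v ∧ (2 : Fin 3) ∉ u ∧ (∀ i < m, cycRun m i u = 0) ∧
      ∃ r s : Fin (m + 1), r.val = (if m = 2 then 0 else 1 + m / 2) ∧
        pfaRun (Tdelta (m + 1) hn) ⟨1, by omega⟩ v = some s ∧
        pfaRun (Tdelta (m + 1) hn) r v = some s := by
  have hm : 2 ≤ m := by omega
  obtain ⟨s, hs⟩ := hw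
  by_cases h2 : (2 : Fin 3) ∈ w
  · obtain ⟨u, v, rfl, hu⟩ := List.eq_append_cons_of_mem h2
    have hcycle : ∀ i < m, cycRun m i u = 0 ∧
        pfaRun (Tdelta (m + 1) hn) ⟨1, by omega⟩ v = some s := by
      intro i hi
      have h := hs ⟨i, by omega⟩
      rw [pfaRun_append, pfaRun_of_lt hn hi hu, Option.bind_some, pfaRun_cons,
        Tdelta_two_of_lt hn (cycRun_lt hm hi u)] at h
      split_ifs at h with h0
      · exact ⟨h0, h⟩
      · simp at h
    obtain ⟨r, hr, hrv⟩ := Tdelta_two_last hn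
    have hlast := hs (Fin.last m)
    rw [pfaRun_append, pfaRun_last hn hu, Option.bind_some, pfaRun_cons, hr,
      Option.bind_some] at hlast
    exact ⟨u, v, rfl, hu, fun i hi => (hcycle i hi).1, r, s, hrv,
      (hcycle 0 (by omega)).2, hlast⟩
  · have h0 := hs ⟨0, by omega⟩
    have hlast := hs (Fin.last m)
    rw [pfaRun_of_lt hn (show 0 < m by omega) h2] at h0
    rw [pfaRun_last hn h2] at hlast
    have h := congrArg Fin.val (Option.some_injective _ (h0.trans hlast.symm))
    have := cycRun_lt hm (show 0 < m by omega) w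
    simp only [Fin.val_last] at h
    omega

/-- For every `n ≥ 3`, the PFA `T_n` is carefully synchronizing, with unique shortest
carefully synchronizing word `(b a^{n−2})^{n−2} c v` of length `3(n−1)(n−2)/2 + 1`. -/
theorem Tn_shortest_sync (n : ℕ) (hn : 3 ≤ n) :
    IsCareSyncWord (Tdelta n hn) (Tword n) ∧
      (Tword n).length = 3 * (n - 1) * (n - 2) / 2 + 1 ∧
      ∀ w : List (Fin 3), IsCareSyncWord (Tdelta n hn) w →
        (Tword n).length ≤ w.length ∧ (w.length ≤ (Tword n).length → w = Tword n) := by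
  obtain ⟨m, rfl⟩ : ∃ m, n = m + 1 := ⟨n - 1, by omega⟩
  have hm : 2 ≤ m := by omega
  have hlen : (Tword (m + 1)).length = m * (m - 1) + m * (m - 1) / 2 + 1 := by
    rw [Tword_eq hm]
    simp only [List.length_append, List.length_cons, List.length_reverse, length_baPrefix]
    omega
  refine ⟨isCareSyncWord_Tword hn, ?_, fun w hw => ?_⟩
  · rw [hlen, Nat.add_sub_cancel, show m + 1 - 2 = m - 1 by omega, mul_assoc]
    omega
  · obtain ⟨u, v, rfl, hu, hu0, r, s, hr, h1, h2⟩ := exists_split_of_isCareSyncWord hn hw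
    have hrm : r.val < m := by rw [hr]; split_ifs <;> omega
    have hgap := gap_bound hm u hu 0 (m - 1) (by omega) ⟨0, by omega, hu0 0 (by omega)⟩
      fun i hi => Or.inl (hu0 i hi)
    have hmerge := merge_bound hn v ⟨1, by omega⟩ r s (show 1 < m by omega) hrm h1 h2
    have hcost := mergeCost_after_two hm hr
    simp only at hmerge
    simp only [cycPred, if_true] at hgap
    have hv : m * (m - 1) / 2 ≤ v.length := by omega
    rw [hlen, List.length_append, List.length_cons]
    refine ⟨by omega, fun hle => ?_⟩
    have hul : u.length = m * (m - 1) := by omega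
    have hvl : v.length = m * (m - 1) / 2 := by omega
    rw [Tword_eq hm, ← hul, ← hgap.2 (by omega), hul, ← hvl,
      ← hmerge.2 (by omega) (by omega)]
end

section
/- For every k ≥ 3, the string C C A^{k−2} rewrites in one or more steps of the rewrite system R to the string C C A^{k−3} B, i.e. CCA^{k−2} →_R^+ CCA^{k−3}B. -/
/-- The three-letter alphabet {A, B, C}. -/
inductive Letter : Type
  | A
  | B
  | C
  deriving DecidableEq

open Letter

/-- The rules of the rewrite system `R`: `BBA → AAB`, `CBA → CAB`, `CCA → CCB`. -/
def RuleR : List Letter → List Letter → Prop := fun l r =>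
  (l = [B, B, A] ∧ r = [A, A, B]) ∨
  (l = [C, B, A] ∧ r = [C, A, B]) ∨
  (l = [C, C, A] ∧ r = [C, C, B])

/-- `u →_R v`: one rewrite step of the system `R`. -/
def StepR (u v : List Letter) : Prop :=
  ∃ u₁ u₂ l r, RuleR l r ∧ u = u₁ ++ l ++ u₂ ∧ v = u₁ ++ r ++ u₂

theorem StepR.append_right {u v : List Letter} (h : StepR u v) (w : List Letter) :
    StepR (u ++ w) (v ++ w) := by
  obtain ⟨u₁, u₂, l, r, hlr, rfl, rfl⟩ := h
  exact ⟨u₁, u₂ ++ w, l, r, hlr, by simp, by simp⟩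

theorem transGen_stepR_append_right {u v : List Letter} (h : Relation.TransGen StepR u v)
    (w : List Letter) : Relation.TransGen StepR (u ++ w) (v ++ w) :=
  Relation.TransGen.lift (· ++ w) (fun _ _ h => h.append_right w) _ _ h

/-- The induction goes `CCAⁿ⁺³ →⁺ CCAⁿ⁺¹BA →⁺ CCAⁿBBA → CCAⁿ⁺²B`. -/
theorem transGen_stepR_CCA_replicate : ∀ n : ℕ,
    Relation.TransGen StepR ([C, C] ++ List.replicate (n + 1) A)
      ([C, C] ++ List.replicate n A ++ [B])
  | 0 => .single ⟨[], [], _, _, .inr (.inr ⟨rfl, rfl⟩), rfl, rfl⟩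
  | 1 => .tail (b := [C, C, B, A])
      (.single ⟨[], [A], _, _, .inr (.inr ⟨rfl, rfl⟩), rfl, rfl⟩)
      ⟨[C], [], _, _, .inr (.inl ⟨rfl, rfl⟩), rfl, rfl⟩
  | n + 2 => by
    have hCBA := transGen_stepR_append_right (transGen_stepR_CCA_replicate (n + 1)) [A]
    have hBBA := transGen_stepR_append_right (transGen_stepR_CCA_replicate n) [B, A]
    have hAAB : StepR ([C, C] ++ List.replicate n A ++ [B] ++ [B, A])
        ([C, C] ++ List.replicate (n + 2) A ++ [B]) :=
      ⟨[C, C] ++ List.replicate n A, [], _, _, .inl ⟨rfl, rfl⟩, by simp,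
        by simp [List.replicate_succ']⟩
    rw [List.append_assoc [C, C], ← List.replicate_succ'] at hCBA
    rw [List.append_assoc _ [B] [A]] at hCBA
    exact (hCBA.trans hBBA).tail hAAB

/-- For every `k ≥ 3`, `CCA^{k−2} →_R^+ CCA^{k−3}B`. -/
theorem CCA_rewrites_to_CCAB (k : ℕ) (hk : 3 ≤ k) :
    Relation.TransGen StepR
      ([C, C] ++ List.replicate (k - 2) A)
      ([C, C] ++ List.replicate (k - 3) A ++ [B]) := by
  obtain ⟨n, rfl⟩ := Nat.exists_eq_add_of_le' hk
  exact transGen_stepR_CCA_replicate n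
end

section
/- For every k ≥ 3, the smallest possible number of →_R rewrite steps needed to rewrite C C A^{k−2} to a string ending in the letter B is exactly fib(k) − 1; in particular such a rewrite sequence exists. -/
open Letter

/-- `StepRN n u v`: `u` rewrites to `v` in exactly `n` steps of `R`. -/
inductive StepRN : ℕ → List Letter → List Letter → Prop
  | refl (u : List Letter) : StepRN 0 u u
  | tail {n : ℕ} {u v w : List Letter} : StepRN n u v → StepR v w → StepRN (n + 1) u w

theorem StepRN.trans {m n : ℕ} {u v w : List Letter} (huv : StepRN m u v)
    (hvw : StepRN n v w) : StepRN (m + n) u w := by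
  induction hvw with
  | refl _ => exact huv
  | tail _ hs ih => exact (ih huv).tail hs

theorem StepR.stepRN {u v : List Letter} (h : StepR u v) : StepRN 1 u v :=
  (StepRN.refl u).tail h

theorem one_le_fib_succ (n : ℕ) : 1 ≤ Nat.fib (n + 1) :=
  Nat.fib_pos.2 n.succ_pos

/-- After `CC`, the last letter of a block `A^{i+1}` can be turned into `B` in
`fib (i + 3) - 1` steps, leaving everything else unchanged. -/
theorem stepRN_replicate_A (i : ℕ) (w : List Letter) :
    StepRN (Nat.fib (i + 3) - 1) ([C, C] ++ List.replicate i A ++ A :: w)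
      ([C, C] ++ List.replicate i A ++ B :: w) := by
  induction i using Nat.twoStepInduction generalizing w with
  | zero => exact StepR.stepRN ⟨[], w, _, _, .inr (.inr ⟨rfl, rfl⟩), rfl, rfl⟩
  | one =>
    have first : StepR (C :: C :: A :: A :: w) (C :: C :: B :: A :: w) :=
      ⟨[], A :: w, _, _, .inr (.inr ⟨rfl, rfl⟩), rfl, rfl⟩
    have second : StepR (C :: C :: B :: A :: w) (C :: C :: A :: B :: w) :=
      ⟨[C], w, _, _, .inr (.inl ⟨rfl, rfl⟩), rfl, rfl⟩
    exact first.stepRN.tail second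
  | more i ih ih' =>
    have last : StepR ([C, C] ++ List.replicate i A ++ B :: B :: A :: w)
        ([C, C] ++ List.replicate i A ++ A :: A :: B :: w) :=
      ⟨[C, C] ++ List.replicate i A, w, _, _, .inl ⟨rfl, rfl⟩, by simp, by simp⟩
    have inner := ih' (A :: w)
    have outer := ih (B :: A :: w)
    simp only [List.replicate_succ', List.append_assoc, List.cons_append, List.nil_append]
      at inner outer last ⊢
    have count : Nat.fib (i + 2 + 3) - 1 =
        Nat.fib (i + 1 + 3) - 1 + (Nat.fib (i + 3) - 1) + 1 := by
      have h₁ : 1 ≤ Nat.fib (i + 3) := one_le_fib_succ (i + 2)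
      have h₂ : 1 ≤ Nat.fib (i + 1 + 3) := one_le_fib_succ (i + 3)
      have h₃ : Nat.fib (i + 2 + 3) = Nat.fib (i + 3) + Nat.fib (i + 1 + 3) :=
        Nat.fib_add_two
      omega
    rw [count]
    exact (inner.trans outer).tail last

/-- The potential of a string whose first letter has index `j`: a letter `B` of index `j`
contributes `fib (j + 1) - 1`. -/
def potential : ℕ → List Letter → ℕ
  | _, [] => 0
  | j, x :: l => (if x = B then Nat.fib (j + 1) - 1 else 0) + potential (j + 1) l

theorem potential_append (j : ℕ) (u v : List Letter) :
    potential j (u ++ v) = potential j u + potential (j + u.length) v := by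
  induction u generalizing j with
  | nil => simp [potential]
  | cons x u ih =>
    simp only [List.cons_append, potential, ih, List.length_cons]
    rw [← Nat.add_assoc, Nat.add_assoc j, Nat.add_comm 1]

theorem potential_replicate_A (j n : ℕ) : potential j (List.replicate n A) = 0 := by
  induction n generalizing j with
  | zero => rfl
  | succ n ih => simp [List.replicate_succ, potential, ih]

theorem potential_BBA (j : ℕ) (w : List Letter) :
    potential j (A :: A :: B :: w) = potential j (B :: B :: A :: w) + 1 := by
  have h₁ := one_le_fib_succ j
  have h₂ := one_le_fib_succ (j + 1)
  have h₃ : Nat.fib (j + 1 + 1 + 1) = Nat.fib (j + 1) + Nat.fib (j + 1 + 1) :=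
    Nat.fib_add_two
  simp only [potential, reduceCtorEq, if_true, if_false]
  omega

/-- One step from a string `CCw` with `w` free of `C` leads to a string of the same form and
increases the potential by exactly one. -/
theorem StepR.potential_eq {w v : List Letter} (hw : C ∉ w) (h : StepR (C :: C :: w) v) :
    ∃ w', v = C :: C :: w' ∧ C ∉ w' ∧ w'.length = w.length ∧
      potential 2 w' = potential 2 w + 1 := by
  obtain ⟨u₁, u₂, l, r, hr, hu, rfl⟩ := h
  match u₁ with
  | [] =>
    rcases hr with ⟨rfl, rfl⟩ | ⟨rfl, rfl⟩ | ⟨rfl, rfl⟩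
    · simp at hu
    · simp at hu
    · obtain rfl : w = A :: u₂ := by simpa using hu
      refine ⟨B :: u₂, rfl, by simpa using hw, rfl, ?_⟩
      simp [potential, Nat.fib_add_two]
      omega
  | [x] =>
    rcases hr with ⟨rfl, rfl⟩ | ⟨rfl, rfl⟩ | ⟨rfl, rfl⟩
    · simp at hu
    · obtain ⟨rfl, rfl⟩ : C = x ∧ w = B :: A :: u₂ := by simpa using hu
      refine ⟨A :: B :: u₂, rfl, by simpa using hw, rfl, ?_⟩
      simp [potential, Nat.fib_add_two]
      omega
    · simp only [List.cons_append, List.nil_append, List.cons.injEq] at hu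
      simp [hu.2.2] at hw
  | x :: y :: u =>
    obtain ⟨rfl, rfl, rfl⟩ : C = x ∧ C = y ∧ w = u ++ (l ++ u₂) := by simpa using hu
    rcases hr with ⟨rfl, rfl⟩ | ⟨rfl, rfl⟩ | ⟨rfl, rfl⟩
    · refine ⟨u ++ ([A, A, B] ++ u₂), by simp, by simpa using hw, by simp, ?_⟩
      rw [potential_append 2 u, potential_append 2 u, Nat.add_assoc]
      exact congrArg _ (potential_BBA _ u₂)
    · simp at hw
    · simp at hw

theorem StepRN.potential_eq {n m : ℕ} {v : List Letter}
    (h : StepRN n ([C, C] ++ List.replicate m A) v) :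
    ∃ w, v = C :: C :: w ∧ C ∉ w ∧ w.length = m ∧ potential 2 w = n := by
  generalize hu : [C, C] ++ List.replicate m A = u at h
  induction h with
  | refl _ =>
    exact ⟨List.replicate m A, hu.symm, by simp [List.mem_replicate], by simp,
      potential_replicate_A _ _⟩
  | tail _ hs ih =>
    obtain ⟨w, rfl, hw, rfl, rfl⟩ := ih hu
    exact hs.potential_eq hw

/-- For every `k ≥ 3`, the smallest possible number of `→_R` steps needed to rewrite
`CCA^{k−2}` to a string ending in `B` is exactly `fib(k) − 1`; in particular such a
rewrite sequence exists. -/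
theorem min_steps_to_B (k : ℕ) (hk : 3 ≤ k) :
    (∃ v : List Letter,
        StepRN (Nat.fib k - 1) ([C, C] ++ List.replicate (k - 2) A) v ∧
        v.getLast? = some B) ∧
      ∀ (n : ℕ) (v : List Letter),
        StepRN n ([C, C] ++ List.replicate (k - 2) A) v →
        v.getLast? = some B → Nat.fib k - 1 ≤ n := by
  obtain ⟨m, rfl⟩ := Nat.exists_eq_add_of_le' hk
  refine ⟨⟨[C, C] ++ List.replicate m A ++ [B], ?_, List.getLast?_concat⟩, fun n v h hv => ?_⟩
  · have h := stepRN_replicate_A m []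
    rwa [List.append_assoc, ← List.replicate_succ'] at h
  · obtain ⟨w, rfl, -, hlen, rfl⟩ := h.potential_eq
    rcases List.eq_nil_or_concat' w with rfl | ⟨w, x, rfl⟩
    · simp at hv
    · obtain rfl : x = B := by
        rw [← List.cons_append, ← List.cons_append, List.getLast?_concat] at hv
        exact Option.some.inj hv
      have hm : m = w.length := by simp at hlen; omega
      rw [potential_append, hm, show w.length + 3 = 2 + w.length + 1 by omega]
      simp [potential]
end

section
/- Define the weight of a string u = u₁u₂⋯u_k over {A,B,C} by W(u) = Σ_{i : u_i = B} (fib(i) − 1), where positions are indexed from 1. If u →_R v for strings u, v of length k such that every occurrence of the letter C in u is at position 1 or 2, then W(v) = W(u) + 1. -/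
open Letter

/-- The weight `W(u) = Σ_{i : u_i = B} (fib(i) − 1)`, positions indexed from 1
(position `i` corresponds to list index `i − 1`). -/
def weight (u : List Letter) : ℕ :=
  ∑ i ∈ Finset.range u.length,
    if u[i]? = some B then Nat.fib (i + 1) - 1 else 0

/-- The contribution to the weight of a factor preceded by `n` letters. -/
def weightFrom (n : ℕ) (u : List Letter) : ℕ :=
  ∑ i ∈ Finset.range u.length,
    if u[i]? = some B then Nat.fib (n + i + 1) - 1 else 0

theorem weightFrom_append (n : ℕ) (u v : List Letter) :
    weightFrom n (u ++ v) = weightFrom n u + weightFrom (n + u.length) v := by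
  unfold weightFrom
  rw [List.length_append, Finset.sum_range_add]
  congr 1
  · refine Finset.sum_congr rfl fun i hi => ?_
    rw [List.getElem?_append_left (Finset.mem_range.mp hi)]
  · refine Finset.sum_congr rfl fun i _ => ?_
    rw [List.getElem?_append_right (Nat.le_add_right _ _), Nat.add_sub_cancel_left,
      ← Nat.add_assoc]

theorem weight_eq_weightFrom_zero (u : List Letter) : weight u = weightFrom 0 u := by
  simp [weight, weightFrom]

/-- Applying a rule to a factor preceded by `n` letters raises its contribution by one. -/
theorem weightFrom_rule {n : ℕ} {l r : List Letter} (h : RuleR l r)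
    (hC : ∀ i : ℕ, l[i]? = some C → n + i < 2) :
    weightFrom n r = weightFrom n l + 1 := by
  rcases h with ⟨rfl, rfl⟩ | ⟨rfl, rfl⟩ | ⟨rfl, rfl⟩
  · have h₁ : 0 < Nat.fib (n + 1) := Nat.fib_pos.mpr (by omega)
    have h₂ : 0 < Nat.fib (n + 1 + 1) := Nat.fib_pos.mpr (by omega)
    have h₃ : Nat.fib (n + 2 + 1) = Nat.fib (n + 1) + Nat.fib (n + 1 + 1) :=
      Nat.fib_add_two
    simp [weightFrom, Finset.sum_range_succ]
    omega
  · have hn : n < 2 := hC 0 rfl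
    interval_cases n <;> decide
  · have hn : n + 1 < 2 := hC 1 rfl
    obtain rfl : n = 0 := by omega
    decide

/-- If `u →_R v` for strings of length `k` such that every occurrence of `C` in `u` is
at position 1 or 2, then `W(v) = W(u) + 1`. -/
theorem weight_step (k : ℕ) (u v : List Letter) (hu : u.length = k) (hv : v.length = k)
    (h : StepR u v) (hC : ∀ i : ℕ, u[i]? = some C → i < 2) :
    weight v = weight u + 1 := by
  obtain ⟨u₁, u₂, l, r, hR, rfl, rfl⟩ := h
  have hlr : r.length = l.length := by
    simp only [List.length_append] at hu hv
    omega
  have hl : ∀ i : ℕ, l[i]? = some C → 0 + u₁.length + i < 2 := fun i hi => by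
    rw [Nat.zero_add]
    apply hC
    have hlt : i < l.length := (List.getElem?_eq_some_iff.mp hi).1
    rw [List.append_assoc, List.getElem?_append_right (Nat.le_add_right _ _),
      Nat.add_sub_cancel_left, List.getElem?_append_left hlt, hi]
  simp only [weight_eq_weightFrom_zero, weightFrom_append, List.length_append, hlr,
    weightFrom_rule hR hl]
  omega
end

section
/- Let k ≥ 3 and consider the PFA A_k. Let u be a string of length k of the shape CCw with w ∈ {A,B}^{k−2}. (i) If u →_R v for a string v, then S(u)c^i r c^{k−i} = S(v) in the power automaton of A_k, for some i < k. (ii) Conversely, if u does not end in B and there exists an i such that the symbol r is defined on every state of S(u)c^i, then u →_R v for some string v of the shape CCw' with w' ∈ {A,B}^{k−2}. -/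
open Letter

/-- The three symbols of the PFA `A_k`. -/
inductive ASym : Type
  | s
  | r
  | c
  deriving DecidableEq

/-- States of `A_k`: `(t, i)` with `t = 0,1,2` standing for `A_{i+1}`, `B_{i+1}`,
`C_{i+1}` respectively. -/
abbrev AState (k : ℕ) := Fin 3 × Fin k

/-- The transition function of the PFA `A_k` (on `3k` states, `k ≥ 3`). -/
def Adelta (k : ℕ) (hk : 3 ≤ k) : AState k → ASym → Option (AState k) := fun q x =>
  match x with
  | ASym.s => if q.2.val < 2 then some (2, q.2) else some (0, q.2)
  | ASym.c => some (q.1, ⟨(q.2.val + 1) % k, Nat.mod_lt _ (by omega)⟩)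
  | ASym.r =>
    if q.2.val < 2 then
      -- i = 1,2 : A_i r undefined, B_i r = A_i, C_i r = C_i
      (if q.1.val = 0 then none
       else if q.1.val = 1 then some (0, q.2)
       else some (2, q.2))
    else if q.2.val = 2 then
      -- i = 3 : A_3 r = B_3, B_3 r undefined, C_3 r = B_2
      (if q.1.val = 0 then some (1, q.2)
       else if q.1.val = 1 then none
       else some (1, ⟨1, by omega⟩))
    else some q

/-- The index in `Fin 3` associated to a letter. -/
def letterIdx : Letter → Fin 3
  | A => 0
  | B => 1
  | C => 2

/-- For a string `u = a₁⋯a_k`, `Sset k u` is the set of states containing `A_i` iff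
`a_i = A`, `B_i` iff `a_i = B`, and `C_i` iff `a_i = C`. -/
def Sset (k : ℕ) (u : List Letter) : Set (AState k) :=
  {q | ∃ x : Letter, u[(q.2 : ℕ)]? = some x ∧ letterIdx x = q.1}

open scoped Classical in
/-- One step of the power automaton: the image of `V` under symbol `a`, or `∅` if the
symbol is undefined on some state of `V`. -/
noncomputable def powStep {Q σ : Type*} (δ : Q → σ → Option Q) (V : Set Q) (a : σ) :
    Set Q :=
  if ∀ q ∈ V, (δ q a).isSome then {q' | ∃ q ∈ V, δ q a = some q'} else ∅

/-- The action of a word in the power automaton. -/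
noncomputable def powRun {Q σ : Type*} (δ : Q → σ → Option Q) (V : Set Q) (w : List σ) :
    Set Q :=
  w.foldl (powStep δ) V

/-- The states reached by applying `c` repeatedly: every index is rotated. -/
theorem mem_powRun_replicate_c (k : ℕ) (hk : 3 ≤ k) (V : Set (AState k)) (i : ℕ)
    (q : AState k) :
    q ∈ powRun (Adelta k hk) V (List.replicate i ASym.c) ↔
      ∃ p ∈ V, p.1 = q.1 ∧ ((p.2 : ℕ) + i) % k = q.2 := by
  induction i generalizing V with
  | zero =>
    constructor
    · intro h
      exact ⟨q, h, rfl, Nat.mod_eq_of_lt q.2.isLt⟩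
    · rintro ⟨p, hp, h₁, h₂⟩
      rw [Nat.add_zero, Nat.mod_eq_of_lt p.2.isLt] at h₂
      rwa [show q = p from Prod.ext h₁.symm (Fin.ext h₂.symm)]
  | succ n ih =>
    have hstep : powStep (Adelta k hk) V ASym.c =
        {q' | ∃ q ∈ V, Adelta k hk q ASym.c = some q'} :=
      if_pos fun q _ => rfl
    have hrun : powRun (Adelta k hk) V (List.replicate (n + 1) ASym.c) =
        powRun (Adelta k hk) (powStep (Adelta k hk) V ASym.c) (List.replicate n ASym.c) := rfl
    rw [hrun, ih, hstep]
    constructor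
    · rintro ⟨_, ⟨p, hp, h⟩, h₁, h₂⟩
      obtain rfl := Option.some.inj h
      refine ⟨p, hp, h₁, ?_⟩
      rw [← h₂, Nat.mod_add_mod, add_assoc, add_comm 1 n]
    · rintro ⟨p, hp, h₁, h₂⟩
      refine ⟨_, ⟨p, hp, rfl⟩, h₁, ?_⟩
      rw [← h₂, Nat.mod_add_mod, add_assoc, add_comm 1 n]

/-- If, after rotation by `i`, the symbol `r` turns each letter of `u` into the letter of `v` at
the same place, then `c^i r c^(k-i)` maps `S(u)` to `S(v)`. -/
theorem powRun_rotate_r (k : ℕ) (hk : 3 ≤ k) (u v : List Letter) (i : ℕ) (hi : i < k)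
    (hu : u.length = k)
    (h : ∀ (p : ℕ) (j : Fin k) (x : Letter), u[p]? = some x → (j : ℕ) = (p + i) % k →
      ∃ y, v[p]? = some y ∧
        Adelta k hk (letterIdx x, j) ASym.r = some (letterIdx y, j)) :
    powRun (Adelta k hk) (Sset k u)
        (List.replicate i ASym.c ++ [ASym.r] ++ List.replicate (k - i) ASym.c) =
      Sset k v := by
  set V := powRun (Adelta k hk) (Sset k u) (List.replicate i ASym.c) with hV
  have hmem : ∀ q ∈ V, ∃ (p : Fin k) (x y : Letter), u[(p : ℕ)]? = some x ∧
      v[(p : ℕ)]? = some y ∧ (q.2 : ℕ) = (p + i) % k ∧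
      Adelta k hk q ASym.r = some (letterIdx y, q.2) := by
    intro q hq
    obtain ⟨p, ⟨x, hx, hxp⟩, h₁, h₂⟩ := (mem_powRun_replicate_c k hk _ i q).1 hq
    obtain ⟨y, hy, hδ⟩ := h p.2 q.2 x hx h₂.symm
    rw [hxp, h₁] at hδ
    exact ⟨p.2, x, y, hx, hy, h₂.symm, hδ⟩
  have hstep : powStep (Adelta k hk) V ASym.r =
      {q' | ∃ q ∈ V, Adelta k hk q ASym.r = some q'} := by
    refine if_pos fun q hq => ?_
    obtain ⟨_, _, _, _, _, _, hδ⟩ := hmem q hq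
    rw [hδ]; rfl
  have hrun : powRun (Adelta k hk) (Sset k u)
      (List.replicate i ASym.c ++ [ASym.r] ++ List.replicate (k - i) ASym.c) =
      powRun (Adelta k hk) (powStep (Adelta k hk) V ASym.r) (List.replicate (k - i) ASym.c) := by
    simp [powRun, hV]
  have hback : ∀ p : Fin k, ((p + i) % k + (k - i)) % k = (p : ℕ) := by
    intro p
    rw [Nat.mod_add_mod, show (p : ℕ) + i + (k - i) = p + k by omega, Nat.add_mod_right,
      Nat.mod_eq_of_lt p.isLt]
  ext q
  rw [hrun, mem_powRun_replicate_c, hstep]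
  constructor
  · rintro ⟨q', ⟨q₀, hq₀, hq'⟩, h₁, h₂⟩
    obtain ⟨p, x, y, hx, hy, hj, hδ⟩ := hmem q₀ hq₀
    obtain rfl := Option.some.inj (hδ.symm.trans hq')
    refine ⟨y, ?_, h₁⟩
    rw [← h₂]
    simpa only [hj, hback p] using hy
  · rintro ⟨y, hy, hyq⟩
    have hlt : (q.2 : ℕ) < u.length := hu ▸ q.2.isLt
    have hx := List.getElem?_eq_getElem hlt
    have hjlt : ((q.2 : ℕ) + i) % k < k := Nat.mod_lt _ (by omega)
    obtain ⟨y', hy', hδ⟩ := h q.2 ⟨_, hjlt⟩ _ hx rfl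
    obtain rfl := Option.some.inj (hy.symm.trans hy')
    exact ⟨(letterIdx y, ⟨_, hjlt⟩), ⟨(_, ⟨_, hjlt⟩), (mem_powRun_replicate_c k hk _ i _).2
      ⟨(letterIdx u[(q.2 : ℕ)], q.2), ⟨_, hx, rfl⟩, rfl, rfl⟩, hδ⟩, hyq, hback q.2⟩

/-- Rotation by `k - m` brings position `m` to the front. -/
theorem rotate_to_front (k m p : ℕ) (hm : m < k) (hp : p < k) :
    (p + (k - m) % k) % k = if p < m then p + (k - m) else p - m := by
  rw [Nat.add_mod_mod]
  split_ifs with h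
  · exact Nat.mod_eq_of_lt (by omega)
  · rw [show p + (k - m) = p - m + k by omega, Nat.add_mod_right]
    exact Nat.mod_eq_of_lt (by omega)

/-- A rewrite step is simulated by a conjugate of `r` by a rotation. -/
theorem exists_powRun_eq_of_stepR (k : ℕ) (hk : 3 ≤ k) (u v : List Letter)
    (hu : u.length = k) (h : StepR u v) :
    ∃ i < k, powRun (Adelta k hk) (Sset k u)
        (List.replicate i ASym.c ++ [ASym.r] ++ List.replicate (k - i) ASym.c) =
      Sset k v := by
  obtain ⟨u₁, u₂, l, r, hR, rfl, rfl⟩ := h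
  have hl : l.length = 3 := by rcases hR with ⟨rfl, rfl⟩ | ⟨rfl, rfl⟩ | ⟨rfl, rfl⟩ <;> rfl
  have hr : r.length = 3 := by rcases hR with ⟨rfl, rfl⟩ | ⟨rfl, rfl⟩ | ⟨rfl, rfl⟩ <;> rfl
  have hlen : u₁.length + 3 + u₂.length = k := by
    rw [← hu, List.length_append, List.length_append, hl]
  refine ⟨(k - u₁.length) % k, Nat.mod_lt _ (by omega),
    powRun_rotate_r k hk _ _ _ (Nat.mod_lt _ (by omega)) hu ?_⟩
  intro p j x hx hj
  have hp : p < k := hu ▸ (List.getElem?_eq_some_iff.1 hx).1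
  rw [rotate_to_front k _ p (by omega) hp] at hj
  have far : ∀ t : Fin 3, 3 ≤ (j : ℕ) → Adelta k hk (t, j) ASym.r = some (t, j) := by
    intro t h
    simp [Adelta, show ¬ (j : ℕ) < 2 by omega, show ¬ (j : ℕ) = 2 by omega]
  rw [List.append_assoc] at hx ⊢
  rcases Nat.lt_or_ge p u₁.length with hlt | hge
  · rw [if_pos hlt] at hj
    rw [List.getElem?_append_left hlt] at hx ⊢
    exact ⟨x, hx, far _ (by omega)⟩
  rw [if_neg (by omega)] at hj
  rw [List.getElem?_append_right hge, ← hj] at hx ⊢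
  rcases Nat.lt_or_ge (j : ℕ) 3 with hj3 | hj3
  · rw [List.getElem?_append_left (by omega)] at hx ⊢
    have hj' : (j : ℕ) = 0 ∨ (j : ℕ) = 1 ∨ (j : ℕ) = 2 := by omega
    rcases hR with ⟨rfl, rfl⟩ | ⟨rfl, rfl⟩ | ⟨rfl, rfl⟩ <;>
      rcases hj' with h0 | h0 | h0 <;> rw [h0] at hx <;> obtain rfl := Option.some.inj hx <;>
      rw [h0] <;> exact ⟨_, rfl, by simp [Adelta, letterIdx, h0]⟩
  · rw [List.getElem?_append_right (by omega), hl] at hx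
    rw [List.getElem?_append_right (by omega), hr]
    exact ⟨x, hx, far _ hj3⟩

/-- If `r` is defined on a rotation of `S(CCw)`, where `CCw` does not end in `B`, then `CCw` can be
rewritten. -/
theorem exists_stepR_of_r_defined (k : ℕ) (hk : 3 ≤ k) (w : List Letter)
    (hwlen : w.length = k - 2) (hwAB : ∀ x ∈ w, x = A ∨ x = B)
    (hlast : (C :: C :: w).getLast? ≠ some B) (i : ℕ)
    (h : ∀ q ∈ powRun (Adelta k hk) (Sset k (C :: C :: w)) (List.replicate i ASym.c),
      (Adelta k hk q ASym.r).isSome) :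
    ∃ w' : List Letter, w'.length = k - 2 ∧ (∀ x ∈ w', x = A ∨ x = B) ∧
      StepR (C :: C :: w) (C :: C :: w') := by
  have hdef : ∀ (p : ℕ) (j : Fin k) (x : Letter), (C :: C :: w)[p]? = some x →
      (p + i) % k = j → (Adelta k hk (letterIdx x, j) ASym.r).isSome := by
    intro p j x hx hj
    have hp : p < k := by
      have := (List.getElem?_eq_some_iff.1 hx).1
      simp only [List.length_cons] at this
      omega
    exact h _ ((mem_powRun_replicate_c k hk _ i _).2
      ⟨(letterIdx x, ⟨p, hp⟩), ⟨x, hx, rfl⟩, rfl, hj⟩)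
  have front : ∀ p x, (C :: C :: w)[p]? = some x → (p + i) % k < 2 → x ≠ A := by
    rintro p x hx hj rfl
    simpa [Adelta, letterIdx, hj] using hdef p ⟨(p + i) % k, by omega⟩ A hx rfl
  have third : ∀ p x, (C :: C :: w)[p]? = some x → (p + i) % k = 2 → x ≠ B := by
    rintro p x hx hj rfl
    simpa [Adelta, letterIdx] using hdef p ⟨2, by omega⟩ B hx hj
  have wB : ∀ m (hm : m < w.length), (m + 2 + i) % k < 2 → w[m] = B := by
    intro m hm hj
    have := front (m + 2) w[m] (by simp) hj
    exact (hwAB _ (List.getElem_mem hm)).resolve_left this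
  have wA : ∀ m (hm : m < w.length), (m + 2 + i) % k = 2 → w[m] = A := by
    intro m hm hj
    have := third (m + 2) w[m] (by simp) hj
    exact (hwAB _ (List.getElem_mem hm)).resolve_right this
  have hlastB : ∀ hm : k - 3 < w.length, w[k - 3] ≠ B := by
    intro hm hB
    apply hlast
    rw [List.getLast?_eq_getElem?]
    simp only [List.length_cons, Nat.add_sub_cancel]
    rw [show w.length = k - 3 + 1 by omega]
    simpa using List.getElem?_eq_some_iff.2 ⟨hm, hB⟩
  obtain ⟨p, hp, hpi⟩ : ∃ p < k, ∃ n, p + i = k * n := by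
    have hlt := Nat.mod_lt i (show 0 < k by omega)
    have hdiv := Nat.div_add_mod i k
    rcases Nat.eq_zero_or_pos (i % k) with h0 | h0
    · exact ⟨0, by omega, i / k, by omega⟩
    · exact ⟨k - i % k, by omega, i / k + 1, by rw [Nat.mul_add]; omega⟩
  obtain ⟨n, hn⟩ := hpi
  have hmod : ∀ m d, m = p + d → d < k → (m + i) % k = d := by
    rintro _ d rfl hd
    rw [show p + d + i = d + k * n by omega, Nat.add_mul_mod_self_left, Nat.mod_eq_of_lt hd]
  rcases Nat.lt_or_ge (p + 2) k with hp2 | hp2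
  · have h2 := wA p (by omega) (hmod _ 2 rfl (by omega))
    rcases p with _ | _ | p
    · obtain ⟨x, w₂, rfl⟩ := List.exists_cons_of_length_pos (show 0 < w.length by omega)
      obtain rfl : x = A := h2
      refine ⟨B :: w₂, hwlen, ?_, [], w₂, [C, C, A], [C, C, B], ?_, rfl, rfl⟩
      · simp_all
      · simp [RuleR]
    · have h1 := wB 0 (by omega) (by rw [hmod _ 1 rfl (by omega)]; omega)
      obtain ⟨x, w₁, rfl⟩ := List.exists_cons_of_length_pos (show 0 < w.length by omega)
      obtain ⟨y, w₂, rfl⟩ := List.exists_cons_of_length_pos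
        (show 0 < w₁.length by simp at hwlen; omega)
      obtain rfl : x = B := h1
      obtain rfl : y = A := h2
      refine ⟨A :: B :: w₂, hwlen, ?_, [C], w₂, [C, B, A], [C, A, B], ?_, rfl, rfl⟩
      · simp_all
      · simp [RuleR]
    · have h0 := wB p (by omega) (by rw [hmod _ 0 (by omega) (by omega)]; omega)
      have h1 := wB (p + 1) (by omega) (by rw [hmod _ 1 (by omega) (by omega)]; omega)
      have hw : w = w.take p ++ [B, B, A] ++ w.drop (p + 3) := by
        conv_lhs => rw [← List.take_append_drop p w, List.drop_eq_getElem_cons (by omega),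
          List.drop_eq_getElem_cons (by omega), List.drop_eq_getElem_cons (by omega), h0, h1, h2]
        simp
      refine ⟨w.take p ++ [A, A, B] ++ w.drop (p + 3), ?_, ?_,
        C :: C :: w.take p, w.drop (p + 3), [B, B, A], [A, A, B], ?_, ?_, ?_⟩
      · simp only [List.length_append, List.length_take, List.length_drop, List.length_cons,
          List.length_nil]
        omega
      · intro x hx
        simp only [List.mem_append, List.mem_cons, List.not_mem_nil, or_false] at hx
        rcases hx with (hx | hx) | hx
        · exact hwAB x (List.mem_of_mem_take hx)
        · tauto
        · exact hwAB x (List.mem_of_mem_drop hx)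
      · simp [RuleR]
      · conv_lhs => rw [hw]
        simp
      · simp
  · refine absurd (wB (k - 3) (by omega) ?_) (hlastB (by omega))
    rw [hmod _ (k - 1 - p) (by omega) (by omega)]
    omega

/-- Let `k ≥ 3` and let `u = CCw` with `w ∈ {A,B}^{k−2}`.
(i) If `u →_R v`, then `S(u)c^i r c^{k−i} = S(v)` for some `i < k`.
(ii) Conversely, if `u` does not end in `B` and `r` is defined on every state of
`S(u)c^i` for some `i`, then `u →_R v` for some `v = CCw'` with `w' ∈ {A,B}^{k−2}`. -/
theorem Ak_mimics_rewriting (k : ℕ) (hk : 3 ≤ k) (u w : List Letter)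
    (hu : u = C :: C :: w) (hwlen : w.length = k - 2)
    (hwAB : ∀ x ∈ w, x = A ∨ x = B) :
    (∀ v : List Letter, StepR u v →
        ∃ i < k,
          powRun (Adelta k hk) (Sset k u)
              (List.replicate i ASym.c ++ [ASym.r] ++ List.replicate (k - i) ASym.c) =
            Sset k v) ∧
      (u.getLast? ≠ some B →
        (∃ i : ℕ, ∀ q ∈ powRun (Adelta k hk) (Sset k u) (List.replicate i ASym.c),
            (Adelta k hk q ASym.r).isSome) →
        ∃ v w' : List Letter, v = C :: C :: w' ∧ w'.length = k - 2 ∧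
          (∀ x ∈ w', x = A ∨ x = B) ∧ StepR u v) := by
  subst hu
  refine ⟨fun v hv => exists_powRun_eq_of_stepR k hk _ v ?_ hv, ?_⟩
  · simp only [List.length_cons]
    omega
  · rintro hlast ⟨i, h⟩
    obtain ⟨w', hlen, hAB, hstep⟩ := exists_stepR_of_r_defined k hk w hwlen hwAB hlast i h
    exact ⟨_, w', rfl, hlen, hAB, hstep⟩
end

section
/- For every k ≥ 3, the PFA A_k is carefully synchronizing, and every carefully synchronizing word for A_k has length at least fib(k) − 1. -/
section PartialAutomaton

variable {Q σ : Type*} {δ : Q → σ → Option Q}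

theorem foldl_pfaStep_none (w : List σ) : w.foldl (pfaStep δ) none = none := by
  induction w with
  | nil => rfl
  | cons x w ih => simpa [pfaStep] using ih

theorem pfaRun_cons_of_some {q q' : Q} {x : σ} (h : δ q x = some q') (w : List σ) :
    pfaRun δ q (x :: w) = pfaRun δ q' w := by
  simp [pfaRun, pfaStep, h]

theorem exists_step_of_pfaRun_cons {q q' : Q} {x : σ} {w : List σ}
    (h : pfaRun δ q (x :: w) = some q') : ∃ p, δ q x = some p ∧ pfaRun δ p w = some q' := by
  cases hx : δ q x with
  | none => simp [pfaRun, pfaStep, hx, foldl_pfaStep_none] at h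
  | some p => exact ⟨p, rfl, by rwa [pfaRun_cons_of_some hx] at h⟩

theorem pfaRun_singleton (q : Q) (x : σ) : pfaRun δ q [x] = δ q x := by
  simp [pfaRun, pfaStep]

theorem pfaRun_append_of_some {q p : Q} {v : List σ} (h : pfaRun δ q v = some p) (w : List σ) :
    pfaRun δ q (v ++ w) = pfaRun δ p w := by
  simp only [pfaRun, List.foldl_append] at h ⊢
  rw [h]

end PartialAutomaton

/-- The state of type `t` at cyclic position `n mod k`. -/
def cyclicState (k : ℕ) (hk : 3 ≤ k) (t : Fin 3) (n : ℕ) : AState k :=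
  (t, ⟨n % k, Nat.mod_lt _ (by omega)⟩)

/-- The types of the states in the image of `s`: `C, C, A, …, A`. -/
def resetTypes (j : ℕ) : Fin 3 := if j < 2 then 2 else 0

/-- The effect of `r` on the types of a cyclic string whose entry `J ≥ 2` is at the third
position. -/
def rewriteTypes (u : ℕ → Fin 3) (J i : ℕ) : Fin 3 :=
  if i = J then 1
  else if i + 1 = J ∨ i + 2 = J then (if u i = 1 then 0 else u i)
  else u i

section Transitions

variable {k : ℕ} {hk : 3 ≤ k}

theorem cyclicState_congr (t : Fin 3) {m n : ℕ} (h : m % k = n % k) :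
    cyclicState k hk t m = cyclicState k hk t n := by
  simp [cyclicState, h]

theorem eq_cyclicState (q : AState k) : q = cyclicState k hk q.1 q.2.val := by
  ext <;> simp [cyclicState, Nat.mod_eq_of_lt q.2.isLt]

theorem Adelta_c (t : Fin 3) (n : ℕ) :
    Adelta k hk (cyclicState k hk t n) ASym.c = some (cyclicState k hk t (n + 1)) := by
  simp [Adelta, cyclicState]

theorem Adelta_s (t : Fin 3) (n : ℕ) :
    Adelta k hk (cyclicState k hk t n) ASym.s =
      some (cyclicState k hk (resetTypes (n % k)) n) := by
  by_cases h : n % k < 2 <;> simp [Adelta, cyclicState, resetTypes, h]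

theorem pfaRun_replicate_c (m : ℕ) (t : Fin 3) (n : ℕ) :
    pfaRun (Adelta k hk) (cyclicState k hk t n) (List.replicate m ASym.c) =
      some (cyclicState k hk t (n + m)) := by
  induction m generalizing n with
  | zero => rfl
  | succ m ih =>
    rw [List.replicate_succ, pfaRun_cons_of_some (Adelta_c t n), ih, Nat.add_right_comm,
      Nat.add_assoc]

theorem Adelta_r_of_mod_lt_two {t : Fin 3} {n : ℕ} (hn : n % k < 2) (ht : t ≠ 0) :
    Adelta k hk (cyclicState k hk t n) ASym.r =
      some (cyclicState k hk (if t = 1 then 0 else t) n) := by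
  fin_cases t <;> simp_all [Adelta, cyclicState]

theorem ne_zero_of_Adelta_r {t : Fin 3} {n : ℕ} {q : AState k} (hn : n % k < 2)
    (h : Adelta k hk (cyclicState k hk t n) ASym.r = some q) : t ≠ 0 := by
  rintro rfl
  simp [Adelta, cyclicState, hn] at h

theorem Adelta_r_zero_of_mod_eq_two {n : ℕ} (hn : n % k = 2) :
    Adelta k hk (cyclicState k hk 0 n) ASym.r = some (cyclicState k hk 1 n) := by
  simp [Adelta, cyclicState, hn]

theorem ne_one_of_Adelta_r {t : Fin 3} {n : ℕ} {q : AState k} (hn : n % k = 2)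
    (h : Adelta k hk (cyclicState k hk t n) ASym.r = some q) : t ≠ 1 := by
  rintro rfl
  simp [Adelta, cyclicState, hn] at h

theorem Adelta_r_two_of_mod_eq_two {n : ℕ} (hn : n % k = 2) :
    Adelta k hk (cyclicState k hk 2 n) ASym.r = some (cyclicState k hk 1 1) := by
  simp [Adelta, cyclicState, hn, Nat.mod_eq_of_lt (show 1 < k by omega)]

theorem Adelta_r_of_two_lt_mod {t : Fin 3} {n : ℕ} (hn : 2 < n % k) :
    Adelta k hk (cyclicState k hk t n) ASym.r = some (cyclicState k hk t n) := by
  have h1 : ¬ n % k < 2 := by omega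
  have h2 : n % k ≠ 2 := by omega
  simp [Adelta, cyclicState, h1, h2]

theorem add_sub_mod_of_le {i J : ℕ} (hi : i < k) (hJ : 2 ≤ J) (hJk : J < k) (h : J ≤ i + 2) :
    (i + (k + 2 - J)) % k = i + 2 - J := by
  rw [show i + (k + 2 - J) = i + 2 - J + k by omega, Nat.add_mod_right,
    Nat.mod_eq_of_lt (by omega)]

theorem Adelta_r_rewriteTypes {u : ℕ → Fin 3} {J i d : ℕ} (hJ : 2 ≤ J) (hJk : J < k)
    (hd : d % k = (k + 2 - J) % k) (h0 : u J = 0) (h1 : u (J - 1) ≠ 0) (h2 : u (J - 2) ≠ 0)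
    (hi : i < k) :
    Adelta k hk (cyclicState k hk (u i) (i + d)) ASym.r =
      some (cyclicState k hk (rewriteTypes u J i) (i + d)) := by
  have hmod : (i + d) % k = (i + (k + 2 - J)) % k := Nat.ModEq.add_left i hd
  rcases lt_or_ge (i + 2) J with h | h
  · have hlt : 2 < (i + d) % k := by
      rw [hmod, Nat.mod_eq_of_lt (by omega)]; omega
    rw [Adelta_r_of_two_lt_mod hlt, rewriteTypes, if_neg (by omega), if_neg (by omega)]
  · rw [add_sub_mod_of_le hi hJ hJk h] at hmod
    rcases lt_trichotomy i J with h' | rfl | h'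
    · have hu : u i ≠ 0 := by
        rcases (show i = J - 1 ∨ i = J - 2 by omega) with rfl | rfl <;> assumption
      have hR : rewriteTypes u J i = if u i = 1 then 0 else u i := by
        rw [rewriteTypes, if_neg (by omega), if_pos (by omega)]
      rw [Adelta_r_of_mod_lt_two (by omega) hu, hR]
    · rw [h0, Adelta_r_zero_of_mod_eq_two (by omega), rewriteTypes, if_pos rfl]
    · rw [Adelta_r_of_two_lt_mod (by omega), rewriteTypes, if_neg (by omega),
        if_neg (by omega)]

end Transitions

section Existence

/-- Some word carries the string `u` at offset `d` to the string `v` at offset `e`. -/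
def StringReach (k : ℕ) (hk : 3 ≤ k) (u : ℕ → Fin 3) (d : ℕ) (v : ℕ → Fin 3) (e : ℕ) : Prop :=
  ∃ w, ∀ j < k, pfaRun (Adelta k hk) (cyclicState k hk (u j) (j + d)) w =
    some (cyclicState k hk (v j) (j + e))

variable {k : ℕ} {hk : 3 ≤ k}

theorem StringReach.trans {u v w : ℕ → Fin 3} {d e f : ℕ} (h : StringReach k hk u d v e)
    (h' : StringReach k hk v e w f) : StringReach k hk u d w f := by
  obtain ⟨x, hx⟩ := h
  obtain ⟨y, hy⟩ := h'
  exact ⟨x ++ y, fun j hj => by rw [pfaRun_append_of_some (hx j hj), hy j hj]⟩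

theorem StringReach.rotate (u : ℕ → Fin 3) (d e : ℕ) : StringReach k hk u d u e := by
  refine ⟨List.replicate (e + (k - 1) * d) ASym.c, fun j _ => ?_⟩
  rw [pfaRun_replicate_c]
  congr 1
  apply cyclicState_congr
  obtain ⟨l, rfl⟩ : ∃ l, k = l + 1 := ⟨k - 1, by omega⟩
  rw [show j + d + (e + (l + 1 - 1) * d) = j + e + (l + 1) * d by
    simp only [Nat.add_sub_cancel]; ring, Nat.add_mul_mod_self_left]

theorem StringReach.exists_ne_zero (j : ℕ) (hj : j < k) (u : ℕ → Fin 3) (h0 : u 0 = 2)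
    (h1 : u 1 = 2) (d : ℕ) :
    ∃ v e, StringReach k hk u d v e ∧ v j ≠ 0 ∧ (∀ i, j < i → v i = u i) ∧ v 0 = 2 ∧ v 1 = 2 := by
  induction j using Nat.strong_induction_on generalizing u d with
  | _ j ih =>
    by_cases hu : u j = 0
    · have hj2 : 2 ≤ j := by
        by_contra hlt
        rcases (show j = 0 ∨ j = 1 by omega) with rfl | rfl <;> simp_all
      obtain ⟨v, e, hv, hvj, hvi, hv0, hv1⟩ := ih (j - 1) (by omega) (by omega) u h0 h1 d
      obtain ⟨x, f, hx, hxj, hxi, hx0, hx1⟩ := ih (j - 2) (by omega) (by omega) v hv0 hv1 e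
      have hxu : ∀ i, j ≤ i → x i = u i := fun i hi => by
        rw [hxi i (by omega), hvi i (by omega)]
      refine ⟨rewriteTypes x j, k + 2 - j,
        (hv.trans hx).trans ((StringReach.rotate x f (k + 2 - j)).trans
          ⟨[ASym.r], fun i hi => ?_⟩), ?_, fun i hi => ?_, ?_, ?_⟩
      · rw [pfaRun_singleton]
        exact Adelta_r_rewriteTypes hj2 hj rfl (by rw [hxu j le_rfl, hu])
          (by rwa [hxi _ (by omega)]) hxj hi
      · simp [rewriteTypes]
      · rw [rewriteTypes, if_neg (by omega), if_neg (by omega), hxu i hi.le]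
      · simp [rewriteTypes, hx0, show 0 ≠ j by omega]
      · simp [rewriteTypes, hx1, show 1 ≠ j by omega]
    · exact ⟨u, d, StringReach.rotate u d d, hu, fun _ _ => rfl, h0, h1⟩

/-- Some word moves position `x` to `x - 1` and fixes all other positions. -/
theorem exists_word_moving_position {x : ℕ} (hx : 1 ≤ x) (hxk : x < k) :
    ∃ w, ∀ t, ∀ p < k, ∃ t', pfaRun (Adelta k hk) (cyclicState k hk t p) w =
      some (cyclicState k hk t' (if p = x then x - 1 else p)) := by
  obtain ⟨u, e, hue, hlast, -, hu0, hu1⟩ := StringReach.exists_ne_zero (hk := hk) (k - 1) (by omega)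
    resetTypes (by simp [resetTypes]) (by simp [resetTypes]) 0
  obtain ⟨v, hv⟩ := hue.trans (StringReach.rotate u e 1)
  have hu0 : u 0 ≠ 0 := by simp [hu0]
  refine ⟨List.replicate (k + 1 - x) ASym.c ++ ([ASym.s] ++ (v ++ ([ASym.r] ++
    List.replicate (k + x - 2) ASym.c))), fun t p hp => ?_⟩
  rw [pfaRun_append_of_some (pfaRun_replicate_c _ _ _),
    pfaRun_append_of_some ((pfaRun_singleton _ _).trans (Adelta_s _ _))]
  set j := (p + (k + 1 - x)) % k with hj
  have hjk : j < k := Nat.mod_lt _ (by omega)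
  rw [cyclicState_congr (m := p + (k + 1 - x)) (n := j + 0) _ (by simp [hj]),
    pfaRun_append_of_some (hv j hjk)]
  by_cases hpx : p = x
  · have hj1 : j = 1 := by
      rw [hj, show p + (k + 1 - x) = 1 + k by omega, Nat.add_mod_right,
        Nat.mod_eq_of_lt (by omega)]
    rw [hj1, hu1, pfaRun_append_of_some ((pfaRun_singleton _ _).trans
      (Adelta_r_two_of_mod_eq_two (Nat.mod_eq_of_lt (by omega)))), pfaRun_replicate_c, if_pos hpx]
    refine ⟨1, congrArg some (cyclicState_congr _ ?_)⟩
    rw [show 1 + (k + x - 2) = x - 1 + k by omega, Nat.add_mod_right]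
  · have hj1 : j ≠ 1 := by
      rcases lt_or_gt_of_ne hpx with h | h
      · rcases (show p + 1 = x ∨ p + 1 < x by omega) with h' | h'
        · rw [hj, show p + (k + 1 - x) = k by omega, Nat.mod_self]; omega
        · rw [hj, Nat.mod_eq_of_lt (by omega)]; omega
      · rw [hj, show p + (k + 1 - x) = p + 1 - x + k by omega, Nat.add_mod_right,
          Nat.mod_eq_of_lt (by omega)]
        omega
    obtain ⟨t', ht'⟩ : ∃ t', Adelta k hk (cyclicState k hk (u j) (j + 1)) ASym.r =
        some (cyclicState k hk t' (j + 1)) := by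
      rcases (show j = 0 ∨ j = k - 1 ∨ 1 < j ∧ j + 1 < k by omega) with h | h | h
      · rw [h]
        exact ⟨_, Adelta_r_of_mod_lt_two (by rw [Nat.mod_eq_of_lt] <;> omega) hu0⟩
      · rw [h]
        refine ⟨_, Adelta_r_of_mod_lt_two ?_ hlast⟩
        rw [show k - 1 + 1 = k by omega, Nat.mod_self]; omega
      · exact ⟨_, Adelta_r_of_two_lt_mod (by rw [Nat.mod_eq_of_lt] <;> omega)⟩
    rw [pfaRun_append_of_some ((pfaRun_singleton _ _).trans ht'), pfaRun_replicate_c, if_neg hpx]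
    refine ⟨t', congrArg some (cyclicState_congr _ ?_)⟩
    rw [add_assoc, hj, Nat.mod_add_mod,
      show p + (k + 1 - x) + (1 + (k + x - 2)) = p + k + k by omega, Nat.add_mod_right,
      Nat.add_mod_right]

theorem exists_word_truncating_positions (m : ℕ) (hm : m < k) :
    ∃ w, ∀ t, ∀ p < k, ∃ t', pfaRun (Adelta k hk) (cyclicState k hk t p) w =
      some (cyclicState k hk t' (min p (k - 1 - m))) := by
  induction m with
  | zero => exact ⟨[], fun t p hp => ⟨t, by rw [min_eq_left (by omega)]; rfl⟩⟩
  | succ m ih =>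
    obtain ⟨v, hv⟩ := ih (by omega)
    obtain ⟨w, hw⟩ := exists_word_moving_position (hk := hk) (x := k - 1 - m) (by omega) (by omega)
    refine ⟨v ++ w, fun t p hp => ?_⟩
    obtain ⟨t', ht'⟩ := hv t p hp
    obtain ⟨t'', ht''⟩ := hw t' (min p (k - 1 - m)) (by omega)
    refine ⟨t'', ?_⟩
    rw [pfaRun_append_of_some ht', ht'']
    congr 2
    split_ifs <;> omega

theorem exists_isCareSyncWord : ∃ w, IsCareSyncWord (Adelta k hk) w := by
  obtain ⟨w, hw⟩ := exists_word_truncating_positions (hk := hk) (k - 1) (by omega)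
  refine ⟨w ++ [ASym.s], cyclicState k hk (resetTypes (0 % k)) 0, fun q => ?_⟩
  obtain ⟨t, ht⟩ := hw q.1 q.2.val q.2.isLt
  rw [← eq_cyclicState q, Nat.sub_self, Nat.min_zero] at ht
  rw [pfaRun_append_of_some ht, pfaRun_singleton, Adelta_s]

end Existence

section LowerBound

/-- The weight of a string: entry `j` of type `B` counts `fib (j + 1) - 1`. -/
def stringWeight (k : ℕ) (u : ℕ → Fin 3) : ℕ :=
  ∑ j ∈ Finset.range k, if u j = 1 then Nat.fib (j + 1) - 1 else 0

/-- Strings of the form `C, C` followed by entries of type `A` or `B`. -/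
structure IsCCString (u : ℕ → Fin 3) : Prop where
  zero : u 0 = 2
  one : u 1 = 2
  ne_two : ∀ j, 2 ≤ j → u j ≠ 2

theorem isCCString_resetTypes : IsCCString resetTypes :=
  ⟨rfl, rfl, fun j hj => by simp [resetTypes, show ¬ j < 2 by omega]⟩

theorem stringWeight_resetTypes (k : ℕ) : stringWeight k resetTypes = 0 := by
  refine Finset.sum_eq_zero fun j _ => if_neg ?_
  by_cases h : j < 2 <;> simp [resetTypes, h]

theorem IsCCString.eq_one {u : ℕ → Fin 3} (hu : IsCCString u) {j : ℕ} (hj : 2 ≤ j)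
    (h : u j ≠ 0) : u j = 1 := by
  have := hu.ne_two j hj
  omega

theorem IsCCString.rewriteTypes {u : ℕ → Fin 3} (hu : IsCCString u) {J : ℕ} (hJ : 2 ≤ J) :
    IsCCString (rewriteTypes u J) := by
  refine ⟨?_, ?_, fun j hj => ?_⟩
  · simp [_root_.rewriteTypes, hu.zero, show 0 ≠ J by omega]
  · simp [_root_.rewriteTypes, hu.one, show 1 ≠ J by omega]
  · have := hu.ne_two j hj
    unfold _root_.rewriteTypes
    split_ifs <;> first | assumption | decide

theorem stringWeight_rewriteTypes {k : ℕ} {u : ℕ → Fin 3} (hu : IsCCString u) {J : ℕ}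
    (hJ : 2 ≤ J) (hJk : J < k) (h0 : u J = 0) (h1 : u (J - 1) ≠ 0) (h2 : u (J - 2) ≠ 0) :
    stringWeight k (rewriteTypes u J) = stringWeight k u + 1 := by
  obtain ⟨n, rfl⟩ : ∃ n, J = n + 2 := ⟨J - 2, by omega⟩
  rw [show n + 2 - 1 = n + 1 by omega] at h1
  rw [Nat.add_sub_cancel] at h2
  have key : ∀ j ∈ Finset.range k,
      (if rewriteTypes u (n + 2) j = 1 then Nat.fib (j + 1) - 1 else 0) +
        ((if j = n + 1 then Nat.fib (j + 1) - 1 else 0) +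
          (if j = n then Nat.fib (j + 1) - 1 else 0)) =
      (if u j = 1 then Nat.fib (j + 1) - 1 else 0) +
        (if j = n + 2 then Nat.fib (j + 1) - 1 else 0) := by
    intro j _
    have hold : ∀ i, u i ≠ 0 → (if u i = 1 then Nat.fib (i + 1) - 1 else 0) =
        Nat.fib (i + 1) - 1 := by
      intro i hi
      rcases (show i = 0 ∨ i = 1 ∨ 2 ≤ i by omega) with rfl | rfl | h
      · simp
      · simp
      · rw [if_pos (hu.eq_one h hi)]
    have hnew : ¬ (if u j = 1 then (0 : Fin 3) else u j) = 1 := by split_ifs <;> simp_all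
    by_cases e2 : j = n + 2
    · subst e2; simp [rewriteTypes, h0]
    · by_cases e1 : j = n + 1
      · subst e1
        rw [hold _ h1]
        simp [rewriteTypes, hnew]
      · by_cases e0 : j = n
        · subst e0
          rw [hold _ h2]
          simp [rewriteTypes, hnew]
        · simp [rewriteTypes, e0, e1, e2]
  have hsum := Finset.sum_congr rfl key
  simp only [Finset.sum_add_distrib, Finset.sum_ite_eq', Finset.mem_range] at hsum
  rw [if_pos (by omega), if_pos (by omega), if_pos hJk] at hsum
  have hf : Nat.fib (n + 2 + 1) = Nat.fib (n + 1) + Nat.fib (n + 1 + 1) := Nat.fib_add_two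
  have p1 : 0 < Nat.fib (n + 1) := Nat.fib_pos.2 (by omega)
  have p2 : 0 < Nat.fib (n + 1 + 1) := Nat.fib_pos.2 (by omega)
  unfold stringWeight
  omega

theorem le_stringWeight {k : ℕ} (hk : 3 ≤ k) {u : ℕ → Fin 3} (h : u (k - 1) = 1) :
    Nat.fib k - 1 ≤ stringWeight k u := by
  have := Finset.single_le_sum
    (f := fun j => if u j = 1 then Nat.fib (j + 1) - 1 else 0) (s := Finset.range k)
    (fun _ _ => Nat.zero_le _) (Finset.mem_range.2 (show k - 1 < k by omega))
  simpa [stringWeight, h, show k - 1 + 1 = k by omega] using this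

variable {k : ℕ} {hk : 3 ≤ k}

/-- Every residue is attained by the shifted index set `{j + d : j < k}`. -/
theorem exists_lt_add_mod_eq (hk : 3 ≤ k) (d m : ℕ) : ∃ j < k, (j + d) % k = m % k := by
  obtain ⟨l, rfl⟩ : ∃ l, k = l + 1 := ⟨k - 1, by omega⟩
  refine ⟨(m + l * d) % (l + 1), Nat.mod_lt _ (by omega), ?_⟩
  rw [Nat.mod_add_mod, show m + l * d + d = m + (l + 1) * d by ring, Nat.add_mul_mod_self_left]

theorem not_synchronizing_of_stringWeight (w : List ASym) (u : ℕ → Fin 3) (d : ℕ)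
    (hu : IsCCString u) (hw : stringWeight k u + w.length < Nat.fib k - 1) (qs : AState k) :
    ¬ ∀ j < k, pfaRun (Adelta k hk) (cyclicState k hk (u j) (j + d)) w = some qs := by
  induction w generalizing u d with
  | nil =>
    intro h
    have h01 := (h 0 (by omega)).trans (h 1 (by omega)).symm
    simp only [pfaRun, cyclicState, List.foldl_nil, Option.some.injEq, Prod.mk.injEq,
      Fin.mk.injEq] at h01
    have hmod : (0 + d) % k = (1 + d) % k := h01.2
    have := Nat.ModEq.add_right_cancel' d hmod
    rw [Nat.ModEq, Nat.mod_eq_of_lt (by omega), Nat.mod_eq_of_lt (by omega)] at this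
    omega
  | cons x w ih =>
    intro h
    rw [List.length_cons] at hw
    cases x with
    | c =>
      exact ih u (d + 1) hu (by omega) fun j hj => by
        rw [← h j hj, pfaRun_cons_of_some (Adelta_c _ _), add_assoc]
    | s =>
      refine ih resetTypes 0 isCCString_resetTypes
        (by rw [stringWeight_resetTypes]; omega) fun i hi => ?_
      obtain ⟨j, hj, hji⟩ := exists_lt_add_mod_eq hk d i
      rw [← h j hj, pfaRun_cons_of_some (Adelta_s _ _), hji, Nat.mod_eq_of_lt hi,
        cyclicState_congr _ hji, add_zero]
    | r =>
      have hr : ∀ j < k, ∃ q,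
          Adelta k hk (cyclicState k hk (u j) (j + d)) ASym.r = some q := fun j hj =>
        let ⟨q, hq, _⟩ := exists_step_of_pfaRun_cons (h j hj)
        ⟨q, hq⟩
      have hlow : ∀ j < k, (j + d) % k < 2 → u j ≠ 0 := fun j hj hlt =>
        let ⟨_, hq⟩ := hr j hj
        ne_zero_of_Adelta_r hlt hq
      obtain ⟨J, hJk, hJd⟩ := exists_lt_add_mod_eq hk d 2
      rw [Nat.mod_eq_of_lt (show 2 < k by omega)] at hJd
      have hd : d % k = (k + 2 - J) % k := by
        refine Nat.ModEq.add_left_cancel' J ?_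
        rw [Nat.ModEq, hJd, show J + (k + 2 - J) = 2 + k by omega, Nat.add_mod_right,
          Nat.mod_eq_of_lt (by omega)]
      have hshift : ∀ i, (i + d) % k = (i + (k + 2 - J)) % k := fun i => Nat.ModEq.add_left i hd
      by_cases hJ : 2 ≤ J
      · have h0 : u J = 0 := by
          obtain ⟨q, hq⟩ := hr J hJk
          by_contra hne
          exact ne_one_of_Adelta_r hJd hq (hu.eq_one hJ hne)
        have h1 : u (J - 1) ≠ 0 := hlow _ (by omega) (by
          rw [hshift, add_sub_mod_of_le (by omega) hJ hJk (by omega)]; omega)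
        have h2 : u (J - 2) ≠ 0 := hlow _ (by omega) (by
          rw [hshift, add_sub_mod_of_le (by omega) hJ hJk (by omega)]; omega)
        refine ih (rewriteTypes u J) d (hu.rewriteTypes hJ)
          (by rw [stringWeight_rewriteTypes hu hJ hJk h0 h1 h2]; omega) fun i hi => ?_
        rw [← h i hi, pfaRun_cons_of_some (Adelta_r_rewriteTypes hJ hJk hd h0 h1 h2 hi)]
      · have hlast : u (k - 1) ≠ 0 := hlow _ (by omega) (by
          rw [hshift, show k - 1 + (k + 2 - J) = 1 - J + k + k by omega, Nat.add_mod_right,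
            Nat.add_mod_right, Nat.mod_eq_of_lt (by omega)]
          omega)
        have := le_stringWeight hk (hu.eq_one (by omega) hlast)
        omega

end LowerBound

/-- For every `k ≥ 3`, the PFA `A_k` is carefully synchronizing, and every carefully
synchronizing word for `A_k` has length at least `fib(k) − 1`. -/
theorem Ak_care_sync (k : ℕ) (hk : 3 ≤ k) :
    (∃ w : List ASym, IsCareSyncWord (Adelta k hk) w) ∧
      ∀ w : List ASym, IsCareSyncWord (Adelta k hk) w → Nat.fib k - 1 ≤ w.length := by
  refine ⟨exists_isCareSyncWord, fun w ⟨qs, hqs⟩ => ?_⟩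
  by_contra hlt
  exact not_synchronizing_of_stringWeight w resetTypes 0 isCCString_resetTypes
    (by rw [stringWeight_resetTypes]; omega) qs fun j _ => hqs _
end
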